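/- arXiv:math/0601442 — 2 statements merged into one kernel-verified Lean document; each statement's English description precedes it below -/
import Mathlib

section
/- Let a = (0, a_1, a_2, …) be a nondecreasing infinite sequence of integers. Then the map α^a : M_[∞] → M_[∞] is a stable operator. -/
/-!
The graded Betti numbers of a monomial ideal `J` are read off from the homology of its upper Koszul
complexes: `β_{i,j}(J)` is the sum over the multidegrees `b` of total degree `j` of the dimension
of the reduced homology, in dimension `i - 1`, of the complex of all squarefree `S` with
`x^b / x_S ∈ J`.

*Linear quotients.* Let the generators `g₁, g₂, …` of `J` have nondecreasing degrees, and suppose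
that each colon ideal `(g₁, …, g_{k-1}) : g_k` is generated by a set `A_k` of variables. Adding
`g_k` to the list enlarges the Koszul complex in multidegree `b = g_k + c` by the faces
`S ⊆ supp c` for which no variable in `A_k` divides `x^c / x_S`. These new faces can be removed in pairs
`{S, S ∪ {p}}` without changing homology, unless `c` is squarefree with support inside `A_k`; in
that case `supp c` is the only new face. The degree condition decides that this face creates a new
homology class instead of killing an old one. Hence each `g_k` contributes `C(|A_k|, i)` to
`β_{i, deg g_k + i}` (`redH_linQuot`, `bettiGens_linQuot`).

*Strongly stable ideals.* Let `I` be strongly stable. Order `G(I)` by degree and then by the sum of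
the indices. For `u = x_{i₀} ⋯ x_{i_{d-1}}` the colon variables of `α^a(u)` in `α^a(G(I))` are the
`x_l` with `l` in one of the disjoint intervals `[i_{t-1} + a_t, i_t + a_t)`, where `i_{-1} = 0`
(`linQuot_alphaMap`). Their total number does not depend on `a`, so neither do the Betti numbers of
`α^a(I)` (`betti_sigmaIdeal`), and `a = 0` gives back `I` itself (`sigmaIdeal_zero`). This proves
that `α^a` preserves Betti numbers.

*Inclusions.* Every monomial of a strongly stable ideal `I` has an initial part
`x_{i₀} ⋯ x_{i_{e-1}}` that is a minimal generator (`exists_pre_mem_minGens`), and `α^a` maps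
initial parts to initial parts. So for `J ⊆ I` the image of each generator of `J` is divisible by
the image of a generator of `I`.
-/

open scoped Classical
noncomputable section
namespace SqueezedSpheres

/-! ### Monomials of `K[x₁,x₂,…]` as finitely supported exponent vectors (index 0 unused). -/

/-- A monomial of the polynomial ring `S_[∞] = K[x₁,x₂,…]`, recorded by its exponent vector. -/
abbrev Mon : Type := ℕ →₀ ℕ

/-- The total degree of a monomial. -/
def degMon (u : Mon) : ℕ := u.sum fun _ e => e

/-- `m(u) = max{i : xᵢ divides u}` (with value `0` for `u = 1`). -/
def mVar (u : Mon) : ℕ := u.support.sup id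

/-- The weakly increasing list `i₁ ≤ i₂ ≤ ⋯ ≤ i_d` of indices with `u = x_{i₁}⋯x_{i_d}`. -/
def sortedIdx (u : Mon) : List ℕ := (Finsupp.toMultiset u).sort (· ≤ ·)

/-- `u ≼ v`: both have the same degree and, writing `u = x_{i₁}⋯x_{i_d}`,
`v = x_{j₁}⋯x_{j_d}` with weakly increasing indices, `i_k ≤ j_k` for all `k`. -/
def prec (u v : Mon) : Prop := List.Forall₂ (· ≤ ·) (sortedIdx u) (sortedIdx v)

/-- The squarefree monomial `x_S = ∏_{i ∈ S} x_i`. -/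
def sqf (S : Finset ℕ) : Mon := Multiset.toFinsupp (S.val)

/-- `u` is a squarefree monomial. -/
def sqfreeMon (u : Mon) : Prop := ∀ j, u j ≤ 1

/-- The lexicographic order: `u <_lex v` iff the leftmost index where the exponent
vectors differ has a larger exponent in `v`. -/
def lexLT (u v : Mon) : Prop := ∃ r, u r < v r ∧ ∀ t, t < r → u t = v t

/-- The degree reverse lexicographic order induced by `x₁ > x₂ > ⋯`:
`u <_drl v` iff `deg u < deg v`, or the degrees agree and at the largest index
where the exponent vectors differ `u` has the larger exponent. -/
def degrevlexLT (u v : Mon) : Prop :=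
  degMon u < degMon v ∨ (degMon u = degMon v ∧ ∃ r, v r < u r ∧ ∀ t, r < t → u t = v t)

/-- The map `α^a` for a sequence `a : ℕ → ℕ` (with `a 0 = 0` in applications):
`α^a(x_{i₁}x_{i₂}⋯x_{i_k}) = x_{i₁} x_{i₂+a₁} x_{i₃+a₂} ⋯ x_{i_k+a_{k-1}}`
for `i₁ ≤ i₂ ≤ ⋯ ≤ i_k`. -/
def alphaMap (a : ℕ → ℕ) (u : Mon) : Mon :=
  Multiset.toFinsupp (↑((sortedIdx u).mapIdx fun j i => i + a j))

variable (K : Type) [Field K]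

/-! ### Monomial ideals of `S_[∞]`. -/

/-- The monomial `x^u` as a polynomial. -/
def mono (u : Mon) : MvPolynomial ℕ K := MvPolynomial.monomial u 1

/-- The monomial `x^u` belongs to the ideal `I`. -/
def memMon (I : Ideal (MvPolynomial ℕ K)) (u : Mon) : Prop := mono K u ∈ I

/-- The (finitely generated) monomial ideal generated by a finite set of monomials. -/
def monSpan (G : Finset Mon) : Ideal (MvPolynomial ℕ K) :=
  Ideal.span ((fun u => mono K u) '' (↑G : Set Mon))

/-- `G(I)`: the minimal monomial generators of a monomial ideal `I`. -/
def GSet (I : Ideal (MvPolynomial ℕ K)) : Set Mon :=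
  {u | memMon K I u ∧ ∀ i ∈ u.support, ¬ memMon K I (u - Finsupp.single i 1)}

/-- `max(I) = max{m(u) : u ∈ G(I)}`. -/
def maxIdx (I : Ideal (MvPolynomial ℕ K)) : ℕ := sSup (mVar '' GSet K I)

/-- For `σ : M_[∞] → M_[∞]`, the ideal `σ(I)` generated by `{σ(u) : u ∈ G(I)}`. -/
def sigmaIdeal (σ : Mon → Mon) (I : Ideal (MvPolynomial ℕ K)) : Ideal (MvPolynomial ℕ K) :=
  Ideal.span ((fun u => mono K (σ u)) '' GSet K I)

/-- `I` is a finitely generated strongly stable (monomial) ideal of `S_[∞]`: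
it is generated by finitely many monomials and is closed under the moves
`v ∈ I`, `u ≼ v` ⟹ `u ∈ I`. -/
def IsFGStronglyStable (I : Ideal (MvPolynomial ℕ K)) : Prop :=
  (∃ G : Finset Mon, I = monSpan K G) ∧
    ∀ u v : Mon, memMon K I v → prec u v → memMon K I u

/-- `I` is a finitely generated squarefree strongly stable ideal of `S_[∞]`. -/
def IsFGSqfStronglyStable (I : Ideal (MvPolynomial ℕ K)) : Prop :=
  (∃ G : Finset Mon, (∀ u ∈ G, sqfreeMon u) ∧ I = monSpan K G) ∧
    ∀ u v : Mon, sqfreeMon u → sqfreeMon v → memMon K I v → prec u v → memMon K I u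

/-! ### Simplicial homology over `K` of a finite simplicial complex,
used to define graded Betti numbers of monomial ideals (via upper Koszul
simplicial complexes, i.e. Hochster-type formulas) and the Cohen-Macaulay and
Gorenstein* properties (via Reisner-type criteria). -/

/-- Boundary map coefficient: the coefficient of the face `T` in `∂S`. -/
def bCoeff (S T : Finset ℕ) : K :=
  if T ⊆ S ∧ S.card = T.card + 1 then
    (-1 : K) ^ (S.filter fun y => y < (S \ T).sum id).card
  else 0

/-- The simplicial boundary map from `i+1`-element faces to `i`-element faces. -/
def bdry (Δ : Finset (Finset ℕ)) (i : ℕ) :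
    ((↥(Δ.filter fun S => S.card = i + 1) → K)) →ₗ[K]
      (↥(Δ.filter fun S => S.card = i) → K) :=
  Matrix.mulVecLin
    (Matrix.of fun (T : ↥(Δ.filter fun S => S.card = i))
        (S : ↥(Δ.filter fun S => S.card = i + 1)) =>
      bCoeff K (↑S : Finset ℕ) (↑T : Finset ℕ))

/-- `redH K Δ i` is the dimension over `K` of the reduced simplicial homology
`H̃_{i-1}(Δ; K)`, computed at chain position `i` (faces of cardinality `i`);
in particular `redH K Δ 0 = dim H̃_{-1}`. -/
def redH (Δ : Finset (Finset ℕ)) : ℕ → ℕ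
  | 0 => Module.finrank K (↥(Δ.filter fun S => S.card = 0) → K) -
      Module.finrank K ↥(LinearMap.range (bdry K Δ 0))
  | (i + 1) => Module.finrank K ↥(LinearMap.ker (bdry K Δ i)) -
      Module.finrank K ↥(LinearMap.range (bdry K Δ (i + 1)))

/-- Membership of `x^b` in the monomial ideal generated by `G`. -/
def memGen (G : Finset Mon) (b : Mon) : Prop := ∃ g ∈ G, g ≤ b

/-- The upper Koszul simplicial complex `K^a(I)` of the monomial ideal generated
by `G` in multidegree `a`. -/
def koszulCx (G : Finset Mon) (a : Mon) : Finset (Finset ℕ) :=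
  a.support.powerset.filter fun S => memGen G (a - sqf S)

/-- The graded Betti number `β_{i,j}` of the monomial ideal generated by `G`,
via Hochster's formula `β_{i,a}(I) = dim_K H̃_{i-1}(K^a(I); K)` summed over all
multidegrees `a` of total degree `j`. -/
def bettiGens (G : Finset Mon) (i j : ℕ) : ℕ :=
  ∑ a ∈ (Finset.Iic (G.sum id)).filter fun a => degMon a = j,
    redH K (koszulCx G a) i

/-- The graded Betti numbers `β_{ij}(I) = dim_K Tor_i(I, K)_j` of a finitely
generated monomial ideal `I` (of value `0` on ideals that are not finitely
generated monomial ideals). -/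
def betti (I : Ideal (MvPolynomial ℕ K)) (i j : ℕ) : ℕ :=
  if h : ∃ G : Finset Mon, I = monSpan K G then bettiGens K h.choose i j else 0

/-- The graded Betti numbers `β_{ij}(R/I)` of the quotient by a finitely
generated monomial ideal. -/
def bettiQ (I : Ideal (MvPolynomial ℕ K)) (i j : ℕ) : ℕ :=
  if i = 0 then (if j = 0 then 1 else 0) else betti K I (i - 1) j

/-- `β_{ij}(R/I)` allowing integer indices (`0` for negative indices). -/
def bettiQZ (I : Ideal (MvPolynomial ℕ K)) (i j : ℤ) : ℕ :=
  if 0 ≤ i ∧ 0 ≤ j then bettiQ K I i.toNat j.toNat else 0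

/-! ### Stable operators. -/

/-- A map `σ : M_[∞] → M_[∞]` is a stable operator if (i) it preserves all graded
Betti numbers of finitely generated strongly stable ideals and (ii) it preserves
inclusions of finitely generated strongly stable ideals. -/
structure IsStableOperator (σ : Mon → Mon) : Prop where
  betti_eq : ∀ I : Ideal (MvPolynomial ℕ K), IsFGStronglyStable K I →
    ∀ i j, betti K I i j = betti K (sigmaIdeal K σ I) i j
  incl : ∀ J I : Ideal (MvPolynomial ℕ K), IsFGStronglyStable K J →
    IsFGStronglyStable K I → J ≤ I → sigmaIdeal K σ J ≤ sigmaIdeal K σ I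

/-- A map `σ : M_[∞] → M_[∞]` is a squarefree stable operator if (i) it sends
finitely generated squarefree strongly stable ideals to squarefree monomial
ideals with the same graded Betti numbers and (ii) it preserves inclusions of
finitely generated squarefree strongly stable ideals. -/
structure IsSqfStableOperator (σ : Mon → Mon) : Prop where
  sqfree : ∀ I : Ideal (MvPolynomial ℕ K), IsFGSqfStronglyStable K I →
    ∀ u ∈ GSet K I, sqfreeMon (σ u)
  betti_eq : ∀ I : Ideal (MvPolynomial ℕ K), IsFGSqfStronglyStable K I →
    ∀ i j, betti K I i j = betti K (sigmaIdeal K σ I) i j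
  incl : ∀ J I : Ideal (MvPolynomial ℕ K), IsFGSqfStronglyStable K J →
    IsFGSqfStronglyStable K I → J ≤ I → sigmaIdeal K σ J ≤ sigmaIdeal K σ I

/-! ### Generic initial ideals with respect to the degree reverse
lexicographic order. -/

/-- `u` is the initial (leading) monomial of the polynomial `f` w.r.t. degrevlex. -/
def IsLeadMon (f : MvPolynomial ℕ K) (u : Mon) : Prop :=
  u ∈ f.support ∧ ∀ v ∈ f.support, v ≠ u → degrevlexLT v u

/-- The initial ideal of `I` w.r.t. the degree reverse lexicographic order. -/
def inIdeal (I : Ideal (MvPolynomial ℕ K)) : Ideal (MvPolynomial ℕ K) :=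
  Ideal.span {p | ∃ f ∈ I, ∃ u, IsLeadMon K f u ∧ p = mono K u}

/-- The action of a matrix `φ ∈ GL_n(K)` on polynomials,
`x_j ↦ ∑_i φ_{ij} x_i` for `1 ≤ j ≤ n`. -/
def gAct (n : ℕ) (φ : Matrix (Fin n) (Fin n) K) :
    MvPolynomial ℕ K →ₐ[K] MvPolynomial ℕ K :=
  MvPolynomial.aeval fun j =>
    if h : 1 ≤ j ∧ j ≤ n then
      ∑ i : Fin n, MvPolynomial.C (φ i ⟨j - 1, by omega⟩) * MvPolynomial.X ((i : ℕ) + 1)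
    else MvPolynomial.X j

/-- Evaluation of a polynomial in the `n × n` matrix entries at a matrix. -/
def evalMat (n : ℕ) (φ : Matrix (Fin n) (Fin n) K)
    (P : MvPolynomial (Fin n × Fin n) K) : K :=
  MvPolynomial.eval (fun p => φ p.1 p.2) P

/-- `J` is the generic initial ideal of `I` (w.r.t. degrevlex and the action of
`GL_n(K)` on `x₁,…,x_n`): there is a nonempty Zariski open subset of `GL_n(K)`
on which `in(φ(I))` is constantly equal to `J`. -/
def GinSpec (n : ℕ) (I J : Ideal (MvPolynomial ℕ K)) : Prop :=
  ∃ P : MvPolynomial (Fin n × Fin n) K, P ≠ 0 ∧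
    (∃ φ : Matrix (Fin n) (Fin n) K, IsUnit φ.det ∧ evalMat K n φ P ≠ 0) ∧
    ∀ φ : Matrix (Fin n) (Fin n) K, IsUnit φ.det → evalMat K n φ P ≠ 0 →
      inIdeal K (Ideal.map (gAct K n φ) I) = J

/-- The generic initial ideal `gin(I)` w.r.t. the degree reverse lexicographic
order (and coordinate changes of `x₁,…,x_n`). -/
def gin (n : ℕ) (I : Ideal (MvPolynomial ℕ K)) : Ideal (MvPolynomial ℕ K) :=
  if h : ∃ J, GinSpec K n I J then h.choose else ⊥

/-- `gin(I)` for a finitely generated ideal of `S_[∞]`, computed in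
`S_[max(I)]` as in the convention `gin(I) = gin(I ∩ S_[max(I)]) S_[∞]`. -/
def ginInf (I : Ideal (MvPolynomial ℕ K)) : Ideal (MvPolynomial ℕ K) :=
  gin K (maxIdx K I) I

/-! ### Simplicial complexes on `[n]`, Stanley-Reisner ideals, `f`-, `h`- and
`g`-vectors, Cohen-Macaulay and Gorenstein* complexes. -/

/-- `Γ` is a simplicial complex on the vertex set `[n] = {1,…,n}`. -/
def IsComplexOn (n : ℕ) (Γ : Finset (Finset ℕ)) : Prop :=
  (∀ S ∈ Γ, S ⊆ Finset.Icc 1 n) ∧ (∀ S ∈ Γ, ∀ T ⊆ S, T ∈ Γ) ∧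
    (∀ i ∈ Finset.Icc 1 n, ({i} : Finset ℕ) ∈ Γ)

/-- `Γ` is `(d-1)`-dimensional (all faces have at most `d` vertices, some face
has exactly `d` vertices). -/
def IsDimensional (Γ : Finset (Finset ℕ)) (d : ℕ) : Prop :=
  (∀ S ∈ Γ, S.card ≤ d) ∧ ∃ S ∈ Γ, S.card = d

/-- The Stanley-Reisner ideal `I_Γ ⊂ S_[n]` of a simplicial complex on `[n]`. -/
def SRideal (n : ℕ) (Γ : Finset (Finset ℕ)) : Ideal (MvPolynomial ℕ K) :=
  Ideal.span {p | ∃ S : Finset ℕ, S ⊆ Finset.Icc 1 n ∧ S ∉ Γ ∧ p = mono K (sqf S)}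

/-- `fvec Γ i = f_{i-1}(Γ)`, the number of faces of `Γ` with `i` vertices. -/
def fvec (Γ : Finset (Finset ℕ)) (i : ℕ) : ℕ := (Γ.filter fun S => S.card = i).card

/-- The `h`-vector of a `(d-1)`-dimensional complex:
`h_i = ∑_{j=0}^{i} (-1)^{i-j} C(d-j, d-i) f_{j-1}`. -/
def hvec (Γ : Finset (Finset ℕ)) (d i : ℕ) : ℤ :=
  ∑ j ∈ Finset.range (i + 1),
    (-1 : ℤ) ^ (i - j) * (Nat.choose (d - j) (d - i) : ℤ) * (fvec Γ j : ℤ)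

/-- The `g`-vector: `g₀ = 1` and `g_i = h_i - h_{i-1}`. -/
def gvec (Γ : Finset (Finset ℕ)) (d i : ℕ) : ℤ :=
  if i = 0 then 1 else hvec Γ d i - hvec Γ d (i - 1)

/-- The link of a face `S` in `Γ`. -/
def linkOf (Γ : Finset (Finset ℕ)) (S : Finset ℕ) : Finset (Finset ℕ) :=
  Γ.filter fun T => Disjoint S T ∧ S ∪ T ∈ Γ

/-- `Γ` is Cohen-Macaulay over `K` (Reisner's criterion: for every face `S` and
every `i` below the dimension of the link of `S`, `H̃_{i-1}(link S; K) = 0`). -/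
def IsCM (Γ : Finset (Finset ℕ)) : Prop :=
  ∀ S ∈ Γ, ∀ i < (linkOf Γ S).sup Finset.card, redH K (linkOf Γ S) i = 0

/-- `Γ` is a `(d-1)`-dimensional Gorenstein* complex over `K` (the standard
characterization: every link has the reduced homology of a sphere of the
appropriate dimension). -/
def IsGorensteinStar (d : ℕ) (Γ : Finset (Finset ℕ)) : Prop :=
  IsDimensional Γ d ∧
    ∀ S ∈ Γ, ∀ i, redH K (linkOf Γ S) i = if i = d - S.card then 1 else 0

/-! ### The monomial sets `L(Γ)` and `U(Γ)`. -/

/-- `L_i(Γ)`: degree-`i` monomials of `S_[n-d]` not belonging to `gin(I_Γ)`. -/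
def Lset (n d : ℕ) (Γ : Finset (Finset ℕ)) (i : ℕ) : Set Mon :=
  {u | (∀ j ∈ u.support, 1 ≤ j ∧ j ≤ n - d) ∧ degMon u = i ∧
    ¬ memMon K (gin K n (SRideal K n Γ)) u}

/-- `L(Γ)`: monomials of `S_[n-d]` not belonging to `gin(I_Γ)`. -/
def LsetAll (n d : ℕ) (Γ : Finset (Finset ℕ)) : Set Mon :=
  {u | (∀ j ∈ u.support, 1 ≤ j ∧ j ≤ n - d) ∧ ¬ memMon K (gin K n (SRideal K n Γ)) u}

/-- `U(Γ)`: monomials of `S_[n-d-1]` not belonging to `gin(I_Γ)`. -/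
def Uset (n d : ℕ) (Γ : Finset (Finset ℕ)) : Set Mon :=
  {u | (∀ j ∈ u.support, 1 ≤ j ∧ j ≤ n - d - 1) ∧
    ¬ memMon K (gin K n (SRideal K n Γ)) u}

/-- `U_i(Γ)`: degree-`i` monomials of `S_[n-d-1]` not belonging to `gin(I_Γ)`. -/
def UsetDeg (n d : ℕ) (Γ : Finset (Finset ℕ)) (i : ℕ) : Set Mon :=
  {u ∈ Uset K n d Γ | degMon u = i}

/-! ### Lefschetz properties. -/

/-- The ideal generated by the variables outside `{x₁,…,x_n}`. -/
def outsideIdeal (n : ℕ) : Ideal (MvPolynomial ℕ K) :=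
  Ideal.span {p | ∃ j : ℕ, (j = 0 ∨ n < j) ∧ p = MvPolynomial.X j}

/-- A linear form in the variables `x₁,…,x_n`. -/
def IsLinForm (n : ℕ) (f : MvPolynomial ℕ K) : Prop :=
  f ∈ MvPolynomial.homogeneousSubmodule ℕ K 1 ∧ f.vars ⊆ Finset.Icc 1 n

/-- The `i`-th homogeneous component of the quotient by `J`, as a `K`-submodule. -/
def grPiece (J : Ideal (MvPolynomial ℕ K)) (i : ℕ) :
    Submodule K (MvPolynomial ℕ K ⧸ J) :=
  Submodule.map (Ideal.Quotient.mkₐ K J).toLinearMap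
    (MvPolynomial.homogeneousSubmodule ℕ K i)

/-- The ideal `I_Γ + (θ₁,…,θ_d)` inside `S_[n]`, realized in `S_[∞]` by also
killing the variables outside `{x₁,…,x_n}`. -/
def fullIdeal (n d : ℕ) (Γ : Finset (Finset ℕ)) (θ : Fin d → MvPolynomial ℕ K) :
    Ideal (MvPolynomial ℕ K) :=
  SRideal K n Γ ⊔ Ideal.span (Set.range θ) ⊔ outsideIdeal K n

/-- `θ₁,…,θ_d` is a system of parameters of `S_[n]/I_Γ` consisting of linear
forms (for a `(d-1)`-dimensional complex: the quotient by them is Artinian,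
i.e. a finite dimensional `K`-vector space). -/
def IsLinearSOP (n d : ℕ) (Γ : Finset (Finset ℕ)) (θ : Fin d → MvPolynomial ℕ K) : Prop :=
  (∀ k, IsLinForm K n (θ k)) ∧ Module.Finite K (MvPolynomial ℕ K ⧸ fullIdeal K n d Γ θ)

/-- Multiplication by (the class of) `f` is injective from the `i`-th to the
`i'`-th homogeneous component of the quotient by `J`. -/
def mulInjOn (J : Ideal (MvPolynomial ℕ K)) (f : MvPolynomial ℕ K) (i i' : ℕ) : Prop :=
  ∀ a b : MvPolynomial ℕ K ⧸ J, a ∈ grPiece K J i → b ∈ grPiece K J i →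
    Ideal.Quotient.mk J f * a = Ideal.Quotient.mk J f * b → a = b

/-- Multiplication by (the class of) `f` maps the `i`-th homogeneous component
of the quotient by `J` onto the `i'`-th one. -/
def mulSurjOnto (J : Ideal (MvPolynomial ℕ K)) (f : MvPolynomial ℕ K) (i i' : ℕ) : Prop :=
  ∀ c ∈ grPiece K J i', ∃ a ∈ grPiece K J i, Ideal.Quotient.mk J f * a = c

/-- The weak Lefschetz property of a `(d-1)`-dimensional (Gorenstein*)
complex `Γ` on `[n]`. -/
def HasWLP (n d : ℕ) (Γ : Finset (Finset ℕ)) : Prop :=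
  ∃ (θ : Fin d → MvPolynomial ℕ K) (ω : MvPolynomial ℕ K),
    IsLinearSOP K n d Γ θ ∧ IsLinForm K n ω ∧
    (∀ i, 1 ≤ i → i ≤ d / 2 → mulInjOn K (fullIdeal K n d Γ θ) ω (i - 1) i) ∧
    (∀ i, d / 2 < i → mulSurjOnto K (fullIdeal K n d Γ θ) ω (i - 1) i)

/-- The strong Lefschetz property of a `(d-1)`-dimensional (Gorenstein*)
complex `Γ` on `[n]`. -/
def HasSLP (n d : ℕ) (Γ : Finset (Finset ℕ)) : Prop :=
  ∃ (θ : Fin d → MvPolynomial ℕ K) (ω : MvPolynomial ℕ K),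
    IsLinearSOP K n d Γ θ ∧ IsLinForm K n ω ∧
    ∀ i ≤ d / 2,
      mulInjOn K (fullIdeal K n d Γ θ) (ω ^ (d - 2 * i)) i (d - i) ∧
      mulSurjOnto K (fullIdeal K n d Γ θ) (ω ^ (d - 2 * i)) i (d - i)

/-! ### Shifted order ideals of monomials, squeezed balls and squeezed spheres. -/

/-- `U` is a shifted order ideal of monomials of `S_[m]`:
it contains `1, x₁,…,x_m`, consists of monomials in `x₁,…,x_m`, is closed
under taking divisors, and is closed under `u ∈ U`, `u ≼ v` ⟹ `v ∈ U`. -/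
def IsShiftedOrderIdeal (m : ℕ) (U : Finset Mon) : Prop :=
  ((0 : Mon) ∈ U) ∧ (∀ i, 1 ≤ i → i ≤ m → (Finsupp.single i 1 : Mon) ∈ U) ∧
  (∀ u ∈ U, ∀ j ∈ (u : Mon).support, 1 ≤ j ∧ j ≤ m) ∧
  (∀ u ∈ U, ∀ v : Mon, v ≤ u → v ∈ U) ∧
  (∀ u ∈ U, ∀ v : Mon, prec u v → (∀ j ∈ v.support, 1 ≤ j ∧ j ≤ m) → v ∈ U)

/-- `I(U) ⊂ S_[∞]`: the ideal generated by all monomials of `S_[m]` not in `U`. -/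
def IU (m : ℕ) (U : Finset Mon) : Ideal (MvPolynomial ℕ K) :=
  Ideal.span {p | ∃ u : Mon, (∀ j ∈ u.support, 1 ≤ j ∧ j ≤ m) ∧ u ∉ U ∧ p = mono K u}

/-- The facet `F_d(u) ⊂ [n]` associated with a monomial `u = x_{i₁}⋯x_{i_k}`,
`i₁ ≤ ⋯ ≤ i_k`:
`F_d(u) = {i₁, i₁+1} ∪ {i₂+2, i₂+3} ∪ ⋯ ∪ {i_k+2(k-1), i_k+2k-1} ∪ {n+2k-d,…,n}`. -/
def Fface (n d : ℕ) (u : Mon) : Finset ℕ :=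
  ((Finset.range (degMon u)).biUnion fun j =>
      {(sortedIdx u).getD j 0 + 2 * j, (sortedIdx u).getD j 0 + 2 * j + 1}) ∪
    Finset.Icc (n + 2 * degMon u - d) n

/-- The squeezed `d`-ball `B_d(U)`: the simplicial complex on `[n]` generated by
`{F_d(u) : u ∈ U}`. -/
def squeezedBall (n d : ℕ) (U : Finset Mon) : Finset (Finset ℕ) :=
  U.biUnion fun u => (Fface n d u).powerset

/-- The squeezed `(d-1)`-sphere `S_d(U) = ∂B_d(U)`: the subcomplex of `B_d(U)`
generated by the `d`-element faces lying in exactly one facet. -/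
def squeezedSphere (n d : ℕ) (U : Finset Mon) : Finset (Finset ℕ) :=
  ((squeezedBall n d U).filter fun G => G.card = d ∧
      ((U.image fun u => Fface n d u).filter fun F => G ⊆ F).card = 1).biUnion
    Finset.powerset

end SqueezedSpheres

/-! ### Linear quotients auxiliary data. -/

namespace SqueezedSpheres
open scoped Classical
noncomputable section

/-- For `u = x_{i₁}⋯x_{i_d}` with `i₁ ≤ ⋯ ≤ i_d`: `iIdx u l = i_l`, with the
convention `i₀ = 1`. -/
def iIdx (u : Mon) (l : ℕ) : ℕ := if l = 0 then 1 else (sortedIdx u).getD (l - 1) 0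

/-- The set `⋃_{l=0}^{d-1} {k : i_l + a_l ≤ k < i_{l+1} + a_l}` (where `i₀ = 1`
and `a₀ = 0`). -/
def ASet (a : ℕ → ℕ) (u : Mon) : Set ℕ :=
  {k | ∃ l < degMon u, iIdx u l + a l ≤ k ∧ k < iIdx u (l + 1) + a l}

/-! ### Polytopal spheres. -/

/-- `S` is the vertex set of a proper (exposed) face of the polytope with
vertices `v i`, `i ∈ [n]`. -/
def IsProperFaceSet (n d : ℕ) (v : ℕ → (Fin d → ℝ)) (S : Finset ℕ) : Prop :=
  ∃ (ℓ : (Fin d → ℝ) →ₗ[ℝ] ℝ) (c : ℝ),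
    (∀ i ∈ Finset.Icc 1 n, ℓ (v i) ≤ c) ∧
    (∀ i ∈ Finset.Icc 1 n, (ℓ (v i) = c ↔ i ∈ S)) ∧
    (∃ i ∈ Finset.Icc 1 n, ℓ (v i) < c)

/-- `Γ` is (isomorphic to) the boundary complex of a simplicial `d`-polytope
with `n` vertices: there is an injective placement `v` of the vertices `[n]` in
`ℝ^d` spanning affinely, each `v i` a vertex (extreme point) of the convex hull,
every proper face a simplex, such that the nonempty faces of `Γ` are exactly
the vertex sets of proper faces of the polytope. -/
def IsPolytopalSphere (n d : ℕ) (Γ : Finset (Finset ℕ)) : Prop :=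
  ∃ v : ℕ → (Fin d → ℝ),
    Set.InjOn v ↑(Finset.Icc 1 n) ∧
    affineSpan ℝ (v '' ↑(Finset.Icc 1 n)) = ⊤ ∧
    (∀ i ∈ Finset.Icc 1 n, v i ∉ convexHull ℝ (v '' ↑((Finset.Icc 1 n).erase i))) ∧
    (∀ S : Finset ℕ, S ⊆ Finset.Icc 1 n → IsProperFaceSet n d v S →
      AffineIndependent ℝ fun i : ↥S => v ↑i) ∧
    (∀ S : Finset ℕ, S.Nonempty →
      (S ∈ Γ ↔ S ⊆ Finset.Icc 1 n ∧ IsProperFaceSet n d v S)) ∧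
    (∅ : Finset ℕ) ∈ Γ

/-! ### Exterior algebraic shifting.

For a generic matrix `g ∈ GL_n(K)` the image of the exterior monomial `e_S` in
the exterior face ring `E/J_Γ` has, in the basis `{e_T : T ∈ Γ}`, coordinates
`± det g[T,S]`; `S` is a face of the exterior algebraic shifted complex
`Δ^e(Γ)` (defined by `J_{Δ^e(Γ)} = Gin(J_Γ)` w.r.t. degrevlex) if and only if
this image does not lie in the span of the images of the `e_T` with
`T <_drl S`. -/

variable (K : Type) [Field K]

/-- Matrix entry `g_{st}` for `1`-based indices `s, t ∈ [n]`. -/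
def gEnt (n : ℕ) (g : Matrix (Fin n) (Fin n) K) (s t : ℕ) : K :=
  if hs : s - 1 < n then if ht : t - 1 < n then g ⟨s - 1, hs⟩ ⟨t - 1, ht⟩ else 0 else 0

/-- The minor `det g[T, S]` of rows `T` and columns `S` (two subsets of `[n]` of
equal cardinality, taken in increasing order). -/
def subDet (n : ℕ) (g : Matrix (Fin n) (Fin n) K) (T S : Finset ℕ) : K :=
  if h : T.card = S.card then
    Matrix.det (Matrix.of fun a b : Fin S.card =>
      gEnt K n g (T.orderEmbOfFin h a) (S.orderEmbOfFin rfl b))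
  else 0

/-- The coordinate vector (in the basis of faces of `Γ`) of the image of the
generic exterior monomial `e_S` in the exterior face ring of `Γ`. -/
def lamVec (n : ℕ) (Γ : Finset (Finset ℕ)) (g : Matrix (Fin n) (Fin n) K)
    (S : Finset ℕ) : Finset ℕ → K :=
  fun T => if T ∈ Γ ∧ T.card = S.card then subDet K n g T S else 0

/-- Degrevlex on squarefree monomials: `S <_drl T` (for `|S| = |T|`) iff the
largest element of the symmetric difference belongs to `S`. -/
def drlSetLT (S T : Finset ℕ) : Prop :=
  ∃ r ∈ S, r ∉ T ∧ ∀ t, r < t → (t ∈ S ↔ t ∈ T)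

/-- `Δ` is the exterior algebraic shifted complex `Δ^e(Γ)` (i.e.
`J_Δ = Gin(J_Γ)`, the generic initial ideal of the exterior face ideal of `Γ`
w.r.t. degrevlex): for every matrix `g` in a nonempty Zariski open subset of
`GL_n(K)`, a subset `S ⊆ [n]` is a face of `Δ` iff the image of the generic
exterior monomial `e_S` in the exterior face ring of `Γ` does not lie in the
span of the images of the `e_T` with `T <_drl S`. -/
def DeltaESpec (n : ℕ) (Γ Δ : Finset (Finset ℕ)) : Prop :=
  ∃ P : MvPolynomial (Fin n × Fin n) K, P ≠ 0 ∧
    (∃ g : Matrix (Fin n) (Fin n) K, IsUnit g.det ∧ evalMat K n g P ≠ 0) ∧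
    ∀ g : Matrix (Fin n) (Fin n) K, IsUnit g.det → evalMat K n g P ≠ 0 →
      ∀ S : Finset ℕ, S ∈ Δ ↔ S ⊆ Finset.Icc 1 n ∧
        lamVec K n Γ g S ∉ Submodule.span K
          {w | ∃ T : Finset ℕ, T ⊆ Finset.Icc 1 n ∧ T.card = S.card ∧
            drlSetLT T S ∧ w = lamVec K n Γ g T}

/-- The exterior algebraic shifted complex `Δ^e(Γ)` of a complex on `[n]`. -/
def deltaE (n : ℕ) (Γ : Finset (Finset ℕ)) : Finset (Finset ℕ) :=
  if h : ∃ Δ, DeltaESpec K n Γ Δ then h.choose else ∅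

/-- The complex `σ(Γ)` on `[n]` defined by `I_{σ(Γ)} = σ(I_Γ S_[∞]) ∩ S_[n]`. -/
def sigmaCplx (n : ℕ) (σ : Mon → Mon) (Γ : Finset (Finset ℕ)) : Finset (Finset ℕ) :=
  (Finset.Icc 1 n).powerset.filter fun S =>
    ¬ memMon K (sigmaIdeal K σ (SRideal K n Γ)) (sqf S)

/-! ### Squeezing. -/

/-- `U(Γ)` as a finite set of monomials. -/
def UFin (n d : ℕ) (Γ : Finset (Finset ℕ)) : Finset Mon :=
  if h : (Uset K n d Γ).Finite then h.toFinset else ∅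

/-- The squeezing operation `Sq(Γ) = S_d(U(Γ))`. -/
def SqCplx (n d : ℕ) (Γ : Finset (Finset ℕ)) : Finset (Finset ℕ) :=
  squeezedSphere n d (UFin K n d Γ)

/-- The face `{i₁, i₂+1, …, i_k+k-1} ∪ {n-k+1,…,n}` associated with a monomial
`u = x_{i₁}⋯x_{i_k}`, `i₁ ≤ ⋯ ≤ i_k`. -/
def Lface (n : ℕ) (u : Mon) : Finset ℕ :=
  ((Finset.range (degMon u)).image fun j => (sortedIdx u).getD j 0 + j) ∪
    Finset.Icc (n - degMon u + 1) n

end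
end SqueezedSpheres

namespace SqueezedSpheres

noncomputable section

/-! ### Simplicial homology via ranks of boundary spans -/

section Homology

variable (K : Type) [Field K]

/-- The boundary chain `∂e_S` of the face `S`, as an element of the free `K`-vector space on all
finite subsets of `ℕ`. Working in one ambient space lets different complexes be compared. -/
def bdFace (S : Finset ℕ) : Finset ℕ →₀ K :=
  ∑ x ∈ S, Finsupp.single (S.erase x) ((-1 : K) ^ (S.filter fun y => y < x).card)

/-- The linear extension of `bdFace` to all chains. -/
def bdLin : (Finset ℕ →₀ K) →ₗ[K] (Finset ℕ →₀ K) :=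
  Finsupp.linearCombination K (bdFace K)

/-- The span of the boundaries of the faces of `Δ` with `i` elements. -/
def bdSpan (Δ : Finset (Finset ℕ)) (i : ℕ) : Submodule K (Finset ℕ →₀ K) :=
  Submodule.span K (bdFace K '' {S | S ∈ Δ ∧ S.card = i})

/-- The rank of the boundary map out of the chains on the `i`-element faces. -/
def bdRank (Δ : Finset (Finset ℕ)) (i : ℕ) : ℕ := Module.finrank K (bdSpan K Δ i)

/-- The number of `i`-element faces. -/
def nFaces (Δ : Finset (Finset ℕ)) (i : ℕ) : ℕ := (Δ.filter fun S => S.card = i).card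

/-- `Δ` is closed under taking subsets, i.e. it is a (possibly void) simplicial complex. -/
def DownClosed (Δ : Finset (Finset ℕ)) : Prop := ∀ S ∈ Δ, ∀ T ⊆ S, T ∈ Δ

lemma finite_level (Δ : Finset (Finset ℕ)) (i : ℕ) : {S | S ∈ Δ ∧ S.card = i}.Finite :=
  Δ.finite_toSet.subset fun _ h => h.1

instance (Δ : Finset (Finset ℕ)) (i : ℕ) : FiniteDimensional K (bdSpan K Δ i) :=
  FiniteDimensional.span_of_finite K ((finite_level Δ i).image _)

lemma bdLin_single (S : Finset ℕ) (c : K) : bdLin K (Finsupp.single S c) = c • bdFace K S := by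
  simp [bdLin]

lemma bdFace_erase {S : Finset ℕ} {x : ℕ} (hx : x ∈ S) :
    bdFace K S (S.erase x) = (-1 : K) ^ (S.filter fun y => y < x).card := by
  rw [bdFace, Finsupp.finsetSum_apply, Finset.sum_eq_single x]
  · simp
  · intro y hy hyx
    rw [Finsupp.single_apply, if_neg]
    intro h
    have : y ∉ S.erase x := h ▸ Finset.notMem_erase y S
    exact this (Finset.mem_erase.2 ⟨hyx, hy⟩)
  · intro h; exact absurd hx h

lemma bdFace_ne_zero {S T : Finset ℕ} (h : bdFace K S T ≠ 0) : ∃ x ∈ S, T = S.erase x := by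
  by_contra hc
  push Not at hc
  apply h
  rw [bdFace, Finsupp.finsetSum_apply]
  refine Finset.sum_eq_zero fun x hx => ?_
  rw [Finsupp.single_apply, if_neg (fun h => hc x hx h.symm)]

lemma bdFace_apply (S T : Finset ℕ) : bdFace K S T = bCoeff K S T := by
  by_cases h : T ⊆ S ∧ S.card = T.card + 1
  · have hc : (S \ T).card = 1 := by
      rw [Finset.card_sdiff_of_subset h.1]; omega
    obtain ⟨x, hx⟩ := Finset.card_eq_one.1 hc
    have hxS : x ∈ S := (Finset.mem_sdiff.1 (hx ▸ Finset.mem_singleton_self x)).1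
    have hT : T = S.erase x := by
      rw [← Finset.sdiff_singleton_eq_erase, ← hx, Finset.sdiff_sdiff_eq_self h.1]
    rw [bCoeff, if_pos h, hx]
    simp only [Finset.sum_singleton, id]
    rw [hT, bdFace_erase K hxS]
  · rw [bCoeff, if_neg h]
    by_contra hne
    obtain ⟨x, hx, rfl⟩ := bdFace_ne_zero K hne
    refine h ⟨Finset.erase_subset _ _, ?_⟩
    rw [Finset.card_erase_of_mem hx]
    have := Finset.card_pos.2 ⟨x, hx⟩
    omega

/-- The sign rule behind `∂∂ = 0`: deleting `x` and then `y` gives the opposite sign of deleting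
`y` and then `x`. -/
lemma sign_swap {S : Finset ℕ} {x y : ℕ} (hx : x ∈ S) (hxy : x < y) :
    (-1 : K) ^ (S.filter fun z => z < x).card * (-1) ^ ((S.erase x).filter fun z => z < y).card +
    (-1 : K) ^ (S.filter fun z => z < y).card * (-1) ^ ((S.erase y).filter fun z => z < x).card
      = 0 := by
  have h1 : ((S.erase y).filter fun z => z < x) = S.filter fun z => z < x := by
    ext z; simp only [Finset.mem_filter, Finset.mem_erase]; constructor
    · rintro ⟨⟨_, h⟩, h'⟩; exact ⟨h, h'⟩
    · rintro ⟨h, h'⟩; exact ⟨⟨by omega, h⟩, h'⟩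
  have h2 : (S.filter fun z => z < y).card = ((S.erase x).filter fun z => z < y).card + 1 := by
    rw [Finset.filter_erase, Finset.card_erase_of_mem (by simp [hx, hxy])]
    have : 0 < (S.filter fun z => z < y).card := Finset.card_pos.2 ⟨x, by simp [hx, hxy]⟩
    omega
  rw [h1, h2, pow_succ]
  ring

lemma bdLin_bdFace (S : Finset ℕ) : bdLin K (bdFace K S) = 0 := by
  rw [bdFace, map_sum]
  simp only [bdLin_single, bdFace, Finset.smul_sum, Finsupp.smul_single, smul_eq_mul]
  rw [Finset.sum_sigma']
  refine Finset.sum_involution (fun p _ => ⟨p.2, p.1⟩) ?_ ?_ ?_ ?_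
  · rintro ⟨x, y⟩ h
    simp only [Finset.mem_sigma, Finset.mem_erase] at h
    obtain ⟨hx, hyx, hy⟩ := h
    dsimp only
    rw [Finset.erase_right_comm, ← Finsupp.single_add]
    rcases lt_or_gt_of_ne hyx with h | h
    · rw [add_comm, sign_swap K hy h, Finsupp.single_zero]
    · rw [sign_swap K hx h, Finsupp.single_zero]
  · rintro ⟨x, y⟩ h _ heq
    simp only [Finset.mem_sigma, Finset.mem_erase] at h
    exact h.2.1 (Sigma.mk.inj heq).1
  · rintro ⟨x, y⟩ h
    simp only [Finset.mem_sigma, Finset.mem_erase] at h ⊢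
    exact ⟨h.2.2, Ne.symm h.2.1, h.1⟩
  · rintro ⟨x, y⟩ h; rfl

/-- The chains supported on the `i`-element faces of `Δ`. -/
def chains (Δ : Finset (Finset ℕ)) (i : ℕ) : Submodule K (Finset ℕ →₀ K) :=
  Submodule.span K ((fun S => Finsupp.single S (1 : K)) '' {S | S ∈ Δ ∧ S.card = i})

instance (Δ : Finset (Finset ℕ)) (i : ℕ) : FiniteDimensional K (chains K Δ i) :=
  FiniteDimensional.span_of_finite K ((finite_level Δ i).image _)

lemma finrank_chains (Δ : Finset (Finset ℕ)) (i : ℕ) :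
    Module.finrank K (chains K Δ i) = nFaces Δ i := by
  have hli : LinearIndependent K (fun S : ↥(Δ.filter fun S => S.card = i) =>
      Finsupp.single (S : Finset ℕ) (1 : K)) :=
    (Finsupp.linearIndependent_single_one K (Finset ℕ)).comp _ Subtype.val_injective
  have := finrank_span_eq_card hli
  rw [Fintype.card_coe] at this
  have hset : (fun S => Finsupp.single S (1 : K)) '' {S | S ∈ Δ ∧ S.card = i} =
      Set.range (fun S : ↥(Δ.filter fun S => S.card = i) =>
        Finsupp.single (S : Finset ℕ) (1 : K)) := by
    ext z
    simp [and_assoc]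
  rw [nFaces, ← this, chains, hset]

lemma map_bdLin_chains (Δ : Finset (Finset ℕ)) (i : ℕ) :
    (chains K Δ i).map (bdLin K) = bdSpan K Δ i := by
  rw [chains, Submodule.map_span, bdSpan, Set.image_image]
  simp [bdLin_single]

lemma bdFace_mem_chains {Δ : Finset (Finset ℕ)} {S : Finset ℕ} {i : ℕ} (hS : S.card = i + 1)
    (h : ∀ x ∈ S, S.erase x ∈ Δ) : bdFace K S ∈ chains K Δ i := by
  refine Submodule.sum_mem _ fun x hx => ?_
  rw [← mul_one ((-1 : K) ^ _), ← smul_eq_mul, ← Finsupp.smul_single]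
  refine Submodule.smul_mem _ _ (Submodule.subset_span ⟨_, ⟨h x hx, ?_⟩, rfl⟩)
  rw [Finset.card_erase_of_mem hx]; omega

/-- The cycles supported on the `i`-element faces of `Δ`. -/
def cycles (Δ : Finset (Finset ℕ)) (i : ℕ) : Submodule K (Finset ℕ →₀ K) :=
  chains K Δ i ⊓ LinearMap.ker (bdLin K)

lemma finrank_cycles (Δ : Finset (Finset ℕ)) (i : ℕ) :
    bdRank K Δ i + Module.finrank K (cycles K Δ i) = nFaces Δ i := by
  let f : ↥(chains K Δ i) →ₗ[K] (Finset ℕ →₀ K) := bdLin K ∘ₗ (chains K Δ i).subtype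
  have h := LinearMap.finrank_range_add_finrank_ker (K := K) (V := ↥(chains K Δ i))
    (V₂ := Finset ℕ →₀ K) f
  rw [finrank_chains] at h
  rw [← h]
  congr 1
  · rw [LinearMap.range_comp, Submodule.range_subtype, map_bdLin_chains, bdRank]
  · rw [LinearMap.ker_comp, cycles, ← Submodule.map_comap_subtype,
      Submodule.finrank_map_subtype_eq]

instance (Δ : Finset (Finset ℕ)) (i : ℕ) : FiniteDimensional K (cycles K Δ i) :=
  Submodule.finiteDimensional_of_le inf_le_left

lemma bdSpan_le_cycles {Δ : Finset (Finset ℕ)} (hΔ : DownClosed Δ) (i : ℕ) :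
    bdSpan K Δ (i + 1) ≤ cycles K Δ i := by
  rw [bdSpan, Submodule.span_le]
  rintro _ ⟨S, ⟨hS, hc⟩, rfl⟩
  exact ⟨bdFace_mem_chains K hc fun x _ => hΔ S hS _ (Finset.erase_subset _ _),
    bdLin_bdFace K S⟩

lemma bdRank_add_le {Δ : Finset (Finset ℕ)} (hΔ : DownClosed Δ) (i : ℕ) :
    bdRank K Δ i + bdRank K Δ (i + 1) ≤ nFaces Δ i := by
  rw [← finrank_cycles K Δ i]
  exact Nat.add_le_add_left (Submodule.finrank_mono (bdSpan_le_cycles K hΔ i)) _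

lemma bdRank_zero (Δ : Finset (Finset ℕ)) : bdRank K Δ 0 = 0 := by
  rw [bdRank, bdSpan]
  have : bdFace K '' {S | S ∈ Δ ∧ S.card = 0} ⊆ {0} := by
    rintro _ ⟨S, ⟨_, hS⟩, rfl⟩
    rw [Finset.card_eq_zero.1 hS]
    simp [bdFace]
  rw [(Submodule.span_eq_bot).2 (fun x hx => this hx)]
  simp

lemma finrank_range_bdry {Δ : Finset (Finset ℕ)} (hΔ : DownClosed Δ) (i : ℕ) :
    Module.finrank K (LinearMap.range (bdry K Δ i)) = bdRank K Δ (i + 1) := by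
  -- extension of chains on the `i`-element faces by zero to the ambient space
  let ι : (↥(Δ.filter fun S => S.card = i) → K) →ₗ[K] (Finset ℕ →₀ K) :=
    (Finsupp.lmapDomain K K (Subtype.val : ↥(Δ.filter fun S => S.card = i) → Finset ℕ)) ∘ₗ
      (Finsupp.linearEquivFunOnFinite K K _).symm.toLinearMap
  have hι : Function.Injective ι :=
    (Finsupp.mapDomain_injective Subtype.val_injective).comp (LinearEquiv.injective _)
  have hιa : ∀ f T (hT : T ∈ Δ.filter fun S => S.card = i), ι f T = f ⟨T, hT⟩ := by
    intro f T hT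
    exact Finsupp.mapDomain_apply Subtype.val_injective
      ((Finsupp.linearEquivFunOnFinite K K _).symm f) ⟨T, hT⟩
  have hιn : ∀ f T, T ∉ (Δ.filter fun S => S.card = i) → ι f T = 0 := by
    intro f T hT
    exact Finsupp.mapDomain_of_notMem_range _ _ (by simpa using hT)
  rw [bdRank, LinearEquiv.finrank_eq (Submodule.equivMapOfInjective ι hι _), bdry,
    Matrix.range_mulVecLin, Submodule.map_span, bdSpan]
  suffices hset : ι '' Set.range (Matrix.of fun (T : ↥(Δ.filter fun S => S.card = i))
        (S : ↥(Δ.filter fun S => S.card = i + 1)) =>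
          bCoeff K (↑S : Finset ℕ) (↑T : Finset ℕ)).col =
      bdFace K '' {S | S ∈ Δ ∧ S.card = i + 1} by rw [hset]
  ext z
  have key : ∀ S : ↥(Δ.filter fun S => S.card = i + 1),
      ι ((Matrix.of fun (T : ↥(Δ.filter fun S => S.card = i))
        (S : ↥(Δ.filter fun S => S.card = i + 1)) =>
          bCoeff K (↑S : Finset ℕ) (↑T : Finset ℕ)).col S) = bdFace K S := by
    intro S
    ext T
    by_cases hT : T ∈ Δ.filter fun S => S.card = i
    · rw [hιa _ _ hT, bdFace_apply]; rfl
    · rw [hιn _ _ hT]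
      by_contra hne
      obtain ⟨x, hx, rfl⟩ := bdFace_ne_zero K (Ne.symm hne)
      have hS := Finset.mem_filter.1 S.2
      refine hT (Finset.mem_filter.2 ⟨hΔ _ hS.1 _ (Finset.erase_subset _ _), ?_⟩)
      rw [Finset.card_erase_of_mem hx, hS.2]; rfl
  constructor
  · rintro ⟨_, ⟨S, rfl⟩, rfl⟩
    exact ⟨S, Finset.mem_filter.1 S.2, (key S).symm⟩
  · rintro ⟨S, hS, rfl⟩
    exact ⟨_, ⟨⟨S, Finset.mem_filter.2 hS⟩, rfl⟩, key _⟩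

lemma redH_eq {Δ : Finset (Finset ℕ)} (hΔ : DownClosed Δ) (i : ℕ) :
    redH K Δ i = nFaces Δ i - bdRank K Δ i - bdRank K Δ (i + 1) := by
  cases i with
  | zero =>
    rw [redH, finrank_range_bdry K hΔ, bdRank_zero, Module.finrank_fintype_fun_eq_card,
      Fintype.card_coe]
    rfl
  | succ i =>
    have := LinearMap.finrank_range_add_finrank_ker (bdry K Δ i)
    rw [Module.finrank_fintype_fun_eq_card, Fintype.card_coe, finrank_range_bdry K hΔ] at this
    rw [redH, finrank_range_bdry K hΔ, nFaces]
    omega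

/-! ### Adding one face, and adding a free pair of faces -/

lemma nFaces_insert {Δ : Finset (Finset ℕ)} {F : Finset ℕ} (hF : F ∉ Δ) (i : ℕ) :
    nFaces (insert F Δ) i = nFaces Δ i + if i = F.card then 1 else 0 := by
  rw [nFaces, nFaces, Finset.filter_insert]
  by_cases h : F.card = i
  · rw [if_pos h, if_pos h.symm, Finset.card_insert_of_notMem]
    simp [hF]
  · rw [if_neg h, if_neg (Ne.symm h), add_zero]

lemma bdSpan_insert_of_ne {Δ : Finset (Finset ℕ)} {F : Finset ℕ} {i : ℕ} (h : i ≠ F.card) :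
    bdSpan K (insert F Δ) i = bdSpan K Δ i := by
  rw [bdSpan, bdSpan]
  congr 2
  ext S
  simp only [Finset.mem_insert, Set.mem_ofPred_eq]
  constructor
  · rintro ⟨rfl | h1, h2⟩
    · exact absurd h2.symm h
    · exact ⟨h1, h2⟩
  · rintro ⟨h1, h2⟩; exact ⟨Or.inr h1, h2⟩

lemma bdSpan_insert_self (Δ : Finset (Finset ℕ)) (F : Finset ℕ) :
    bdSpan K (insert F Δ) F.card = bdSpan K Δ F.card ⊔ Submodule.span K {bdFace K F} := by
  rw [bdSpan, bdSpan, ← Submodule.span_union, Set.union_singleton, ← Set.image_insert_eq]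
  congr 2
  ext S
  simp only [Finset.mem_insert, Set.mem_ofPred_eq, Set.mem_insert_iff]
  constructor
  · rintro ⟨rfl | h1, h2⟩
    · exact Or.inl rfl
    · exact Or.inr ⟨h1, h2⟩
  · rintro (rfl | ⟨h1, h2⟩)
    · exact ⟨Or.inl rfl, rfl⟩
    · exact ⟨Or.inr h1, h2⟩

lemma bdRank_insert_of_mem {Δ : Finset (Finset ℕ)} {F : Finset ℕ}
    (h : bdFace K F ∈ bdSpan K Δ F.card) (i : ℕ) :
    bdRank K (insert F Δ) i = bdRank K Δ i := by
  by_cases hi : i = F.card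
  · subst hi
    rw [bdRank, bdSpan_insert_self, sup_eq_left.2 ((Submodule.span_singleton_le_iff_mem _ _).2 h),
      bdRank]
  · rw [bdRank, bdSpan_insert_of_ne K hi, bdRank]

lemma bdRank_insert_of_notMem {Δ : Finset (Finset ℕ)} {F : Finset ℕ}
    (h : bdFace K F ∉ bdSpan K Δ F.card) (i : ℕ) :
    bdRank K (insert F Δ) i = bdRank K Δ i + if i = F.card then 1 else 0 := by
  by_cases hi : i = F.card
  · subst hi
    rw [if_pos rfl, bdRank, bdSpan_insert_self, bdRank]
    have h0 : bdFace K F ≠ 0 := fun h0 => h (h0 ▸ Submodule.zero_mem _)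
    have hd : Disjoint (bdSpan K Δ F.card) (Submodule.span K {bdFace K F}) :=
      (Submodule.disjoint_span_singleton' h0).2 h
    have := Submodule.finrank_sup_add_finrank_inf_eq (bdSpan K Δ F.card)
      (Submodule.span K {bdFace K F})
    rwa [hd.eq_bot, finrank_bot, add_zero, finrank_span_singleton h0] at this
  · rw [bdRank, bdSpan_insert_of_ne K hi, bdRank, if_neg hi, add_zero]

/-- Adding a facet `F` whose boundary already bounds in `Δ` (automatic when the homology one
position below `F` vanishes) creates exactly one new class, at position `|F|`. -/
lemma redH_insert {Δ : Finset (Finset ℕ)} {F : Finset ℕ} (hΔ : DownClosed Δ)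
    (hΔF : DownClosed (insert F Δ)) (hF : F ∉ Δ)
    (h0 : ∀ q, F.card = q + 1 → redH K Δ q = 0) (i : ℕ) :
    redH K (insert F Δ) i = redH K Δ i + if i = F.card then 1 else 0 := by
  have hmem : bdFace K F ∈ bdSpan K Δ F.card := by
    rcases Nat.eq_zero_or_eq_succ_pred F.card with h | h
    · rw [Finset.card_eq_zero.1 h]
      simp [bdFace]
    · set q := F.card.pred
      have hq := h0 q h
      rw [redH_eq K hΔ] at hq
      have hle := finrank_cycles K Δ q
      have heq : bdSpan K Δ (q + 1) = cycles K Δ q := by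
        refine Submodule.eq_of_le_of_finrank_le (bdSpan_le_cycles K hΔ q) ?_
        change _ ≤ bdRank K Δ (q + 1)
        omega
      rw [h, Nat.succ_eq_add_one, heq]
      refine ⟨bdFace_mem_chains K h fun x hx => ?_, bdLin_bdFace K F⟩
      have := hΔF F (Finset.mem_insert_self _ _) (F.erase x) (Finset.erase_subset _ _)
      rcases Finset.mem_insert.1 this with h' | h'
      · exact absurd hx (h' ▸ Finset.notMem_erase x F)
      · exact h'
  have := bdRank_add_le K hΔ i
  rw [redH_eq K hΔF, redH_eq K hΔ, bdRank_insert_of_mem K hmem, bdRank_insert_of_mem K hmem,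
    nFaces_insert hF]
  omega

/-- Elementary collapse: adding a face `S` together with a face `S ∪ {v}` leaves the homology
unchanged. -/
lemma redH_insert_pair {Δ : Finset (Finset ℕ)} {S : Finset ℕ} {v : ℕ} (hv : v ∉ S)
    (hΔ : DownClosed Δ) (hΔS : DownClosed (insert (insert v S) (insert S Δ)))
    (hS : S ∉ Δ) (i : ℕ) :
    redH K (insert (insert v S) (insert S Δ)) i = redH K Δ i := by
  have hT : insert v S ∉ Δ := fun h => hS (hΔ _ h _ (Finset.subset_insert _ _))
  have hne : insert v S ≠ S := fun h => hv (h ▸ Finset.mem_insert_self v S)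
  have hT' : insert v S ∉ insert S Δ := by simp [hne, hT]
  have hcard : (insert v S).card = S.card + 1 := Finset.card_insert_of_notMem hv
  have hvT : v ∈ insert v S := Finset.mem_insert_self v S
  have herase : (insert v S).erase v = S := Finset.erase_insert hv
  have hSmem : bdFace K S ∈ bdSpan K Δ S.card := by
    have h := bdLin_bdFace K (insert v S)
    rw [bdFace, map_sum, ← Finset.add_sum_erase _ _ hvT] at h
    simp only [bdLin_single] at h
    rw [herase, add_eq_zero_iff_eq_neg] at h
    have hin : ((-1 : K) ^ ((insert v S).filter fun y => y < v).card) • bdFace K S ∈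
        bdSpan K Δ S.card := by
      rw [h]
      refine Submodule.neg_mem _ (Submodule.sum_mem _ fun x hx => Submodule.smul_mem _ _
        (Submodule.subset_span ⟨_, ⟨?_, ?_⟩, rfl⟩))
      · have hxv : x ≠ v := fun h => hv (h ▸ hx)
        have := hΔS _ (Finset.mem_insert_self _ _) ((insert v S).erase x) (Finset.erase_subset _ _)
        rcases Finset.mem_insert.1 this with h' | h'
        · exact absurd (Finset.mem_insert_of_mem hx) (h' ▸ Finset.notMem_erase x (insert v S))
        · rcases Finset.mem_insert.1 h' with h' | h'
          · exact absurd (h' ▸ Finset.mem_erase.2 ⟨hxv.symm, hvT⟩) hv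
          · exact h'
      · rw [Finset.card_erase_of_mem (Finset.mem_insert_of_mem hx), hcard]; rfl
    exact (Submodule.smul_mem_iff _ (pow_ne_zero _ (neg_ne_zero.2 one_ne_zero))).1 hin
  -- no boundary of a face of `Δ` involves `S`, whereas `∂e_{S ∪ v}` does
  have hTnot : bdFace K (insert v S) ∉ bdSpan K (insert S Δ) (insert v S).card := by
    rw [bdSpan_insert_of_ne K (by omega)]
    intro hmem
    have hle : bdSpan K Δ (insert v S).card ≤ LinearMap.ker (Finsupp.lapply (R := K) S) := by
      rw [bdSpan, Submodule.span_le]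
      rintro _ ⟨U, ⟨hU, _⟩, rfl⟩
      by_contra hne
      obtain ⟨x, hx, h⟩ := bdFace_ne_zero K (T := S) hne
      exact hS (hΔ U hU S (h ▸ Finset.erase_subset _ _))
    have h2 : bdFace K (insert v S) S = 0 := hle hmem
    have h3 := bdFace_erase K hvT
    rw [herase, h2] at h3
    exact pow_ne_zero _ (neg_ne_zero.2 one_ne_zero) h3.symm
  rw [redH_eq K hΔS, redH_eq K hΔ, bdRank_insert_of_notMem K hTnot,
    bdRank_insert_of_notMem K hTnot, bdRank_insert_of_mem K hSmem, bdRank_insert_of_mem K hSmem,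
    nFaces_insert hT', nFaces_insert hS, hcard]
  have := bdRank_add_le K hΔ i
  split_ifs <;> omega

/-- Adding all pairs `S`, `S ∪ {v}` with `S` in a family `E` of sets avoiding `v` leaves the
homology unchanged: the pairs can be added one at a time in order of increasing size. -/
lemma redH_union_pairs {Δ : Finset (Finset ℕ)} (hΔ : DownClosed Δ) (v : ℕ)
    (E : Finset (Finset ℕ)) (hv : ∀ S ∈ E, v ∉ S) (hE : ∀ S ∈ E, S ∉ Δ)
    (hD : DownClosed (Δ ∪ (E ∪ E.image (insert v)))) (i : ℕ) :
    redH K (Δ ∪ (E ∪ E.image (insert v))) i = redH K Δ i := by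
  induction E using Finset.induction_on_max_value (Finset.card (α := ℕ)) with
  | empty => simp
  | insert S E hSE hmax ih =>
    have hvS := hv S (Finset.mem_insert_self _ _)
    have hSΔ := hE S (Finset.mem_insert_self _ _)
    have heq : Δ ∪ (insert S E ∪ (insert S E).image (insert v)) =
        insert (insert v S) (insert S (Δ ∪ (E ∪ E.image (insert v)))) := by
      ext U
      simp only [Finset.mem_union, Finset.mem_insert, Finset.mem_image, exists_eq_or_imp]
      rw [eq_comm (a := insert v S)]
      tauto
    -- the only faces containing `S` are `S` and `S ∪ {v}`
    have hsup : ∀ U ∈ Δ ∪ (E ∪ E.image (insert v)), ¬ S ⊆ U := by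
      intro U hU hSU
      simp only [Finset.mem_union, Finset.mem_image] at hU
      have aux : ∀ U ∈ E, ¬ S ⊆ U := fun U hU h =>
        hSE (Finset.eq_of_subset_of_card_le h (hmax U hU) ▸ hU)
      rcases hU with hU | hU | ⟨W, hW, rfl⟩
      · exact hSΔ (hΔ U hU S hSU)
      · exact aux U hU hSU
      · exact aux W hW ((Finset.subset_insert_iff_of_notMem hvS).1 hSU)
    have hD' : DownClosed (Δ ∪ (E ∪ E.image (insert v))) := by
      intro U hU W hW
      have hm := hD U (by rw [heq]; exact Finset.mem_insert_of_mem (Finset.mem_insert_of_mem hU))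
        W hW
      rw [heq] at hm
      rcases Finset.mem_insert.1 hm with rfl | hm
      · exact absurd ((Finset.subset_insert _ _).trans hW) (hsup U hU)
      · rcases Finset.mem_insert.1 hm with rfl | hm
        · exact absurd hW (hsup U hU)
        · exact hm
    rw [heq] at hD ⊢
    rw [redH_insert_pair K hvS hD' hD (fun h => hsup S h subset_rfl)]
    exact ih (fun S hS => hv S (Finset.mem_insert_of_mem hS))
      (fun S hS => hE S (Finset.mem_insert_of_mem hS)) hD'

lemma redH_empty (i : ℕ) : redH K ∅ i = 0 := by
  rw [redH_eq K (by intro S hS; simp at hS)]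
  simp [nFaces]

end Homology

/-! ### Betti numbers of monomial ideals with linear quotients -/

lemma sqf_apply (S : Finset ℕ) (x : ℕ) : sqf S x = if x ∈ S then 1 else 0 := by
  rw [sqf, Multiset.toFinsupp_apply, Multiset.count_eq_of_nodup S.nodup]
  rfl

lemma sqf_injective : Function.Injective sqf := by
  intro S T h
  ext x
  have := DFunLike.congr_fun h x
  rw [sqf_apply, sqf_apply] at this
  split_ifs at this <;> simp_all

lemma degMon_add (u v : Mon) : degMon (u + v) = degMon u + degMon v :=
  Finsupp.sum_add_index' (fun _ => rfl) (fun _ _ _ => rfl)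

lemma degMon_sqf (S : Finset ℕ) : degMon (sqf S) = S.card :=
  Multiset.toFinsupp_sum_eq S.val

lemma degMon_le {u v : Mon} (h : u ≤ v) : degMon u ≤ degMon v := by
  obtain ⟨w, rfl⟩ := exists_add_of_le h
  rw [degMon_add]; omega

lemma eq_of_le_of_degMon_le {u v : Mon} (h : u ≤ v) (hd : degMon v ≤ degMon u) : u = v := by
  obtain ⟨w, rfl⟩ := exists_add_of_le h
  rw [degMon_add] at hd
  have hw : w.sum (fun _ e => e) = 0 := by change degMon w = 0; omega
  rw [Finsupp.sum, Finset.sum_eq_zero_iff] at hw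
  have : w = 0 := by
    ext x
    by_contra hx
    exact hx (hw x (Finsupp.mem_support_iff.2 hx))
  simp [this]

lemma mem_koszulCx {G : Finset Mon} {b : Mon} {S : Finset ℕ} :
    S ∈ koszulCx G b ↔ S ⊆ b.support ∧ memGen G (b - sqf S) := by
  simp [koszulCx]

lemma memGen_insert {G : Finset Mon} {g b : Mon} :
    memGen (insert g G) b ↔ g ≤ b ∨ memGen G b := by
  simp [memGen]

lemma memGen_mono {G : Finset Mon} {b c : Mon} (h : memGen G b) (hbc : b ≤ c) : memGen G c := by
  obtain ⟨g, hg, hgb⟩ := h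
  exact ⟨g, hg, hgb.trans hbc⟩

lemma downClosed_koszulCx (G : Finset Mon) (b : Mon) : DownClosed (koszulCx G b) := by
  intro S hS T hT
  rw [mem_koszulCx] at hS ⊢
  refine ⟨hT.trans hS.1, memGen_mono hS.2 (tsub_le_tsub_left ?_ b)⟩
  intro x
  rw [sqf_apply, sqf_apply]
  split_ifs with h1 h2 <;> first | exact absurd (hT h1) h2 | simp

/-- The ideal generated by `σ(u)`, `u ∈ s`, has linear quotients: the generators can be added one
at a time in order of nondecreasing degree so that the colon ideal of the earlier generators by
`σ(u)` is generated by the variables `x_l`, `l ∈ A u`. -/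
inductive LinQuot (σ : Mon → Mon) (A : Mon → Finset ℕ) : Finset Mon → Prop
  | empty : LinQuot σ A ∅
  | insert (u : Mon) (s : Finset Mon) (hu : u ∉ s) (hs : LinQuot σ A s)
      (hdeg : ∀ v ∈ s, degMon (σ v) ≤ degMon (σ u))
      (hcolon : ∀ c : Mon, (∃ v ∈ s, σ v ≤ σ u + c) ↔ ∃ l ∈ A u, c l ≠ 0) :
      LinQuot σ A (insert u s)

/-- The multidegrees `b` in which a generator `g` with colon variables indexed by `A` contributes
to the `i`-th Betti number: `b = g · x_F` with `F` an `i`-element subset of `A`. -/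
def BettiAt (g : Mon) (A : Finset ℕ) (b : Mon) (i : ℕ) : Prop :=
  ∃ F ⊆ A, F.card = i ∧ b = g + sqf F

/-- Adding a generator `g` whose colon ideal is `(x_l : l ∈ A)`: in multidegree `g + c` the new
faces of the Koszul complex are the sets between `supp c ∩ A` and `supp c`, provided `c ≤ 1`
on `A`. -/
lemma mem_koszulCx_insert {G : Finset Mon} {g c : Mon} {A : Finset ℕ}
    (hcolon : ∀ c : Mon, memGen G (g + c) ↔ ∃ l ∈ A, c l ≠ 0) (S : Finset ℕ) :
    (S ∈ koszulCx (insert g G) (g + c) ↔ S ∈ koszulCx G (g + c) ∨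
      (S ⊆ c.support ∧ ∀ l ∈ A, c l ≤ sqf S l)) ∧
    (S ⊆ c.support → (∀ l ∈ A, c l ≤ sqf S l) → S ∉ koszulCx G (g + c)) := by
  have hsub : S ⊆ c.support → g + c - sqf S = g + (c - sqf S) := by
    intro hS
    refine add_tsub_assoc_of_le ?_ g
    intro x
    rw [sqf_apply]
    split_ifs with hx
    · exact Nat.one_le_iff_ne_zero.2 (Finsupp.mem_support_iff.1 (hS hx))
    · exact Nat.zero_le _
  have hiff : S ⊆ c.support → (memGen G (g + c - sqf S) ↔ ¬ ∀ l ∈ A, c l ≤ sqf S l) := by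
    intro hS
    rw [hsub hS, hcolon]
    simp only [Finsupp.tsub_apply, ne_eq, not_forall, exists_prop]
    refine exists_congr fun l => and_congr_right fun _ => ?_
    omega
  refine ⟨?_, fun hS hA hmem => (hiff hS).1 (mem_koszulCx.1 hmem).2 hA⟩
  rw [mem_koszulCx, mem_koszulCx, memGen_insert]
  constructor
  · rintro ⟨hS, h | h⟩
    · have hSc : S ⊆ c.support := by
        intro x hx
        have h1 := h x
        have h2 := Finsupp.mem_support_iff.1 (hS hx)
        rw [Finsupp.tsub_apply, sqf_apply, if_pos hx, Finsupp.add_apply] at h1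
        rw [Finsupp.add_apply] at h2
        rw [Finsupp.mem_support_iff]
        omega
      by_cases hA : ∀ l ∈ A, c l ≤ sqf S l
      · exact Or.inr ⟨hSc, hA⟩
      · exact Or.inl ⟨hS, (hiff hSc).2 hA⟩
    · exact Or.inl ⟨hS, h⟩
  · rintro (⟨hS, h⟩ | ⟨hS, hA⟩)
    · exact ⟨hS, Or.inr h⟩
    · refine ⟨fun x hx => ?_, Or.inl ?_⟩
      · have := Finsupp.mem_support_iff.1 (hS hx)
        rw [Finsupp.mem_support_iff, Finsupp.add_apply]
        omega
      · rw [hsub hS]; exact le_self_add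

/-- Homology of the Koszul complexes of an ideal with linear quotients. When a generator is added,
the interval of new faces collapses unless it is a single face; in that case nondecreasing degrees
force the homology one position lower to vanish, so exactly one new class appears. -/
lemma redH_linQuot (K : Type) [Field K] {σ : Mon → Mon} {A : Mon → Finset ℕ} {s : Finset Mon}
    (hs : LinQuot σ A s) (b : Mon) (i : ℕ) :
    redH K (koszulCx (s.image σ) b) i =
      ∑ u ∈ s, if BettiAt (σ u) (A u) b i then 1 else 0 := by
  induction hs generalizing i with
  | empty =>
    have : koszulCx (Finset.image σ ∅) b = ∅ := by
      ext S; simp [mem_koszulCx, memGen]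
    rw [this, redH_empty]; simp
  | insert u s hu hs hdeg hcolon ih =>
    rw [Finset.sum_insert hu, ← ih, Finset.image_insert]
    have hcolon' : ∀ c : Mon, memGen (s.image σ) (σ u + c) ↔ ∃ l ∈ A u, c l ≠ 0 := by
      intro c
      rw [← hcolon c]
      simp [memGen]
    set G := s.image σ
    set g := σ u
    by_cases hg : g ≤ b
    swap
    · have h1 : koszulCx (insert g G) b = koszulCx G b := by
        ext S
        rw [mem_koszulCx, mem_koszulCx, memGen_insert]
        refine and_congr_right fun _ => or_iff_right fun h => hg (h.trans tsub_le_self)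
      rw [h1, if_neg, zero_add]
      rintro ⟨F, _, _, rfl⟩
      exact hg le_self_add
    obtain ⟨c, rfl⟩ := exists_add_of_le hg
    have key := fun S => (mem_koszulCx_insert (c := c) hcolon' S).1
    have key' := fun S => (mem_koszulCx_insert (c := c) hcolon' S).2
    have hDG := downClosed_koszulCx G (g + c)
    have hDG' := downClosed_koszulCx (insert g G) (g + c)
    by_cases hv : ∃ v ∈ c.support, v ∉ A u
    · obtain ⟨v, hvc, hvA⟩ := hv
      rw [if_neg, zero_add]
      swap
      · rintro ⟨F, hF, _, h⟩
        have h := add_left_cancel h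
        rw [h, Finsupp.mem_support_iff, sqf_apply] at hvc
        by_cases hvF : v ∈ F
        · exact hvA (hF hvF)
        · simp [hvF] at hvc
      set E := c.support.powerset.filter fun S => (∀ l ∈ A u, c l ≤ sqf S l) ∧ v ∉ S
      have hsq : ∀ S, ∀ l ∈ A u, sqf (insert v S) l = sqf S l := by
        intro S l hl
        have : l ≠ v := fun h => hvA (h ▸ hl)
        simp [sqf_apply, this]
      have heq : koszulCx (insert g G) (g + c) =
          koszulCx G (g + c) ∪ (E ∪ E.image (insert v)) := by
        ext S
        rw [key, Finset.mem_union, Finset.mem_union, Finset.mem_image]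
        refine or_congr_right ?_
        simp only [E, Finset.mem_filter, Finset.mem_powerset]
        constructor
        · rintro ⟨h1, h2⟩
          by_cases hvS : v ∈ S
          · refine Or.inr ⟨S.erase v, ⟨(Finset.erase_subset _ _).trans h1, fun l hl => ?_,
              Finset.notMem_erase _ _⟩, Finset.insert_erase hvS⟩
            rw [← hsq _ l hl, Finset.insert_erase hvS]
            exact h2 l hl
          · exact Or.inl ⟨h1, h2, hvS⟩
        · rintro (⟨h1, h2, _⟩ | ⟨T, ⟨h1, h2, _⟩, rfl⟩)
          · exact ⟨h1, h2⟩
          · exact ⟨Finset.insert_subset hvc h1, fun l hl => by rw [hsq _ l hl]; exact h2 l hl⟩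
      rw [heq] at hDG' ⊢
      refine redH_union_pairs K hDG v E ?_ ?_ hDG' i
      · intro S hS
        exact (Finset.mem_filter.1 hS).2.2
      · intro S hS
        have := Finset.mem_filter.1 hS
        exact key' S (Finset.mem_powerset.1 this.1) this.2.1
    push Not at hv
    by_cases hl : ∃ l, 2 ≤ c l
    · obtain ⟨l, hl⟩ := hl
      have hlA : l ∈ A u := hv l (Finsupp.mem_support_iff.2 (by omega))
      have hle : ∀ F, sqf F l ≤ 1 := fun F => by rw [sqf_apply]; split_ifs <;> simp
      rw [if_neg, zero_add]
      · congr 1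
        ext S
        rw [key]
        refine or_iff_left fun h => ?_
        have := h.2 l hlA
        have := hle S
        omega
      · rintro ⟨F, _, _, h⟩
        have h := add_left_cancel h
        have := hle F
        rw [← h] at this
        omega
    push Not at hl
    have hc : c = sqf c.support := by
      ext x
      have := hl x
      rw [sqf_apply]
      split_ifs with hx
      · have := Finsupp.mem_support_iff.1 hx; omega
      · exact Finsupp.notMem_support_iff.1 hx
    set F := c.support
    have hBA : ∀ j, BettiAt g (A u) (g + c) j ↔ j = F.card := by
      intro j
      constructor
      · rintro ⟨F', _, rfl, h⟩
        have h := add_left_cancel h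
        rw [hc] at h
        rw [sqf_injective h]
      · rintro rfl
        exact ⟨F, hv, rfl, by rw [← hc]⟩
    have heq : koszulCx (insert g G) (g + c) = insert F (koszulCx G (g + c)) := by
      ext S
      rw [key, Finset.mem_insert, or_comm]
      refine or_congr_left ⟨?_, ?_⟩
      · rintro ⟨h1, h2⟩
        refine subset_antisymm h1 fun x hx => ?_
        have h3 := h2 x (hv x hx)
        have h4 := Finsupp.mem_support_iff.1 hx
        rw [sqf_apply] at h3
        by_contra hxS
        rw [if_neg hxS] at h3
        omega
      · rintro rfl
        exact ⟨subset_rfl, fun l _ => by rw [← hc]⟩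
    have hFn : F ∉ koszulCx G (g + c) := key' F subset_rfl fun l _ => by rw [← hc]
    rw [heq] at hDG' ⊢
    rw [redH_insert K hDG hDG' hFn, add_comm]
    · simp only [hBA]
    · intro q hq
      rw [ih, Finset.sum_eq_zero]
      intro v hvs
      rw [if_neg]
      rintro ⟨F', _, hF', h⟩
      have h := congrArg degMon h
      rw [hc] at h
      rw [degMon_add, degMon_add, degMon_sqf, degMon_sqf, hF', hq] at h
      have := hdeg v hvs
      omega

lemma LinQuot.antichain {σ : Mon → Mon} {A : Mon → Finset ℕ} {s : Finset Mon}
    (hs : LinQuot σ A s) : ∀ u ∈ s, ∀ v ∈ s, σ v ≤ σ u → σ v = σ u := by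
  induction hs with
  | empty => simp
  | insert u s hu hs hdeg hcolon ih =>
    intro x hx y hy hxy
    rcases Finset.mem_insert.1 hx with rfl | hxs <;> rcases Finset.mem_insert.1 hy with rfl | hys
    · rfl
    · obtain ⟨l, _, h⟩ := (hcolon 0).1 ⟨y, hys, by simpa using hxy⟩
      exact absurd rfl h
    · exact eq_of_le_of_degMon_le hxy (hdeg x hxs)
    · exact ih x hxs y hys hxy

lemma LinQuot.exists_le_add_single {σ : Mon → Mon} {A : Mon → Finset ℕ} {s : Finset Mon}
    (hs : LinQuot σ A s) :
    ∀ u ∈ s, ∀ l ∈ A u, ∃ v ∈ s, σ v ≤ σ u + Finsupp.single l 1 ∧ ¬ σ v ≤ σ u := by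
  induction hs with
  | empty => simp
  | insert u s hu hs hdeg hcolon ih =>
    intro x hx l hl
    rcases Finset.mem_insert.1 hx with rfl | hx
    · obtain ⟨v, hv, h⟩ := (hcolon (Finsupp.single l 1)).2 ⟨l, hl, by simp⟩
      refine ⟨v, Finset.mem_insert_of_mem hv, h, fun hle => ?_⟩
      obtain ⟨l, _, h⟩ := (hcolon 0).1 ⟨v, hv, by simpa using hle⟩
      exact absurd rfl h
    · obtain ⟨v, hv, h⟩ := ih x hx l hl
      exact ⟨v, Finset.mem_insert_of_mem hv, h⟩

/-- The multidegrees contributing to the Betti numbers are bounded by the degree used as summation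
range in `bettiGens`, for any generating set `G` of the ideal: `G` contains all the minimal
generators, and raising the exponent of `x_l` with `l ∈ A u` by one stays below one of them. -/
lemma LinQuot.le_sum {σ : Mon → Mon} {A : Mon → Finset ℕ} {s : Finset Mon}
    (hs : LinQuot σ A s) {G : Finset Mon} (hG : ∀ x, memGen G x ↔ memGen (s.image σ) x)
    {u : Mon} (hu : u ∈ s) {F : Finset ℕ} (hF : F ⊆ A u) : σ u + sqf F ≤ G.sum id := by
  have hmem : ∀ v ∈ s, σ v ∈ G := by
    intro v hv
    obtain ⟨h, hhG, hh⟩ := (hG (σ v)).2 ⟨σ v, Finset.mem_image_of_mem _ hv, le_rfl⟩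
    obtain ⟨g, hg, hgh⟩ := (hG h).1 ⟨h, hhG, le_rfl⟩
    obtain ⟨w, hw, rfl⟩ := Finset.mem_image.1 hg
    have := hs.antichain v hv w hw (hgh.trans hh)
    rwa [← le_antisymm hh (this ▸ hgh)]
  have hle : ∀ v ∈ s, σ v ≤ G.sum id := fun v hv =>
    Finset.single_le_sum (f := id) (fun _ _ => zero_le) (hmem v hv)
  intro x
  rw [Finsupp.add_apply, sqf_apply]
  split_ifs with hx
  · obtain ⟨v, hv, h1, h2⟩ := hs.exists_le_add_single u hu x (hF hx)
    have h3 : σ u x < σ v x := by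
      by_contra h3
      refine h2 fun y => ?_
      have := h1 y
      rw [Finsupp.add_apply, Finsupp.single_apply] at this
      split_ifs at this with hxy
      · subst hxy; omega
      · simpa using this
    exact (Nat.succ_le_of_lt h3).trans (hle v hv x)
  · exact hle u hu x

/-- The Betti numbers of an ideal with linear quotients, computed from any generating set. -/
lemma bettiGens_linQuot (K : Type) [Field K] {σ : Mon → Mon} {A : Mon → Finset ℕ}
    {s : Finset Mon} (hs : LinQuot σ A s) {G : Finset Mon}
    (hG : ∀ x, memGen G x ↔ memGen (s.image σ) x) (i j : ℕ) :
    bettiGens K G i j =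
      ∑ u ∈ s, if degMon (σ u) + i = j then (A u).card.choose i else 0 := by
  have hK : ∀ b, koszulCx G b = koszulCx (s.image σ) b := by
    intro b; ext S; rw [mem_koszulCx, mem_koszulCx, hG]
  rw [bettiGens]
  simp only [hK, redH_linQuot K hs]
  rw [Finset.sum_comm]
  refine Finset.sum_congr rfl fun u hu => ?_
  rw [← Finset.card_filter]
  split_ifs with hj
  · rw [← Finset.card_powersetCard]
    symm
    refine Finset.card_bij (fun F _ => σ u + sqf F) ?_ ?_ ?_
    · intro F hF
      rw [Finset.mem_powersetCard] at hF
      simp only [Finset.mem_filter, Finset.mem_Iic]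
      refine ⟨⟨hs.le_sum hG hu hF.1, ?_⟩, F, hF.1, hF.2, rfl⟩
      rw [degMon_add, degMon_sqf, hF.2, hj]
    · intro F _ F' _ h
      exact sqf_injective (add_left_cancel h)
    · intro b hb
      obtain ⟨F, h1, h2, rfl⟩ := (Finset.mem_filter.1 hb).2
      exact ⟨F, Finset.mem_powersetCard.2 ⟨h1, h2⟩, rfl⟩
  · rw [Finset.card_eq_zero, Finset.filter_eq_empty_iff]
    rintro b hb ⟨F, _, h2, rfl⟩
    have := (Finset.mem_filter.1 hb).2
    rw [degMon_add, degMon_sqf, h2] at this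
    exact hj this

/-! ### Monomials as weakly increasing index sequences -/

/-- The `t`-th index (counting from `0`) of `u = x_{i₀} x_{i₁} ⋯ x_{i_{d-1}}`,
`i₀ ≤ i₁ ≤ ⋯ ≤ i_{d-1}`; the value for `t ≥ d` is irrelevant. -/
def idx (u : Mon) (t : ℕ) : ℕ := (sortedIdx u).getD t 0

/-- The monomial `x_{f 0} x_{f 1} ⋯ x_{f (d-1)}`. -/
def ofSeq (d : ℕ) (f : ℕ → ℕ) : Mon := Multiset.toFinsupp ((Multiset.range d).map f)

lemma length_sortedIdx (u : Mon) : (sortedIdx u).length = degMon u := by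
  rw [sortedIdx, Multiset.length_sort, Finsupp.card_toMultiset]
  rfl

lemma sortedIdx_getElem (u : Mon) (t : ℕ) (h : t < (sortedIdx u).length) :
    (sortedIdx u)[t] = idx u t := by
  rw [idx, List.getD_eq_getElem _ _ h]

lemma pairwise_sortedIdx (u : Mon) : (sortedIdx u).Pairwise (· ≤ ·) :=
  Multiset.pairwise_sort _ _

lemma idx_mono (u : Mon) {t t' : ℕ} (h : t ≤ t') (ht : t' < degMon u) : idx u t ≤ idx u t' := by
  have ht' : t' < (sortedIdx u).length := by rwa [length_sortedIdx]
  rw [← sortedIdx_getElem u t (by omega), ← sortedIdx_getElem u t' ht']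
  rcases h.eq_or_lt with rfl | h
  · exact le_rfl
  · exact List.pairwise_iff_getElem.1 (pairwise_sortedIdx u) _ _ _ _ h

lemma ofSeq_apply (d : ℕ) (f : ℕ → ℕ) (l : ℕ) :
    ofSeq d f l = ((Finset.range d).filter fun t => f t = l).card := by
  rw [ofSeq, Multiset.toFinsupp_apply, Multiset.count_map]
  simp only [eq_comm (a := l)]
  rfl

lemma degMon_ofSeq (d : ℕ) (f : ℕ → ℕ) : degMon (ofSeq d f) = d := by
  have := Multiset.toFinsupp_sum_eq ((Multiset.range d).map f)
  rw [Multiset.card_map, Multiset.card_range] at this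
  exact this

lemma sortedIdx_ofSeq {d : ℕ} {f : ℕ → ℕ} (hf : ∀ t t', t < t' → t' < d → f t ≤ f t') :
    sortedIdx (ofSeq d f) = (List.range d).map f := by
  rw [sortedIdx, ofSeq, Multiset.toFinsupp_toMultiset]
  refine List.Perm.eq_of_pairwise (le := (· ≤ ·)) (fun _ _ _ _ => le_antisymm)
    (Multiset.pairwise_sort _ _) ?_ ?_
  · rw [List.pairwise_iff_getElem]
    intro i j hi hj hij
    simp only [List.length_map, List.length_range] at hj
    simpa using hf i j hij hj
  · rw [← Multiset.coe_eq_coe, Multiset.sort_eq]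
    rfl

lemma idx_ofSeq {d : ℕ} {f : ℕ → ℕ} (hf : ∀ t t', t < t' → t' < d → f t ≤ f t') {t : ℕ}
    (ht : t < d) : idx (ofSeq d f) t = f t := by
  rw [idx, sortedIdx_ofSeq hf, List.getD_eq_getElem _ _ (by simpa using ht)]
  simp

lemma alphaMap_eq (a : ℕ → ℕ) (u : Mon) :
    alphaMap a u = ofSeq (degMon u) fun t => idx u t + a t := by
  rw [alphaMap, ofSeq]
  congr 1
  change _ = ((List.map _ (List.range (degMon u)) : List ℕ) : Multiset ℕ)
  congr 1
  refine List.ext_getElem (by simp [length_sortedIdx]) fun i h1 h2 => ?_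
  simp [sortedIdx_getElem]

lemma ofSeq_idx (u : Mon) : ofSeq (degMon u) (idx u) = u := by
  have h : (((List.range (degMon u)).map (idx u) : List ℕ) : Multiset ℕ) = sortedIdx u := by
    congr 1
    refine List.ext_getElem (by simp [length_sortedIdx]) fun i h1 h2 => ?_
    simp [sortedIdx_getElem]
  change Multiset.toFinsupp (((List.range (degMon u)).map (idx u) : List ℕ) : Multiset ℕ) = u
  rw [h, sortedIdx, Multiset.sort_eq, Finsupp.toMultiset_toFinsupp]

lemma alphaMap_zero (u : Mon) : alphaMap (fun _ => 0) u = u := by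
  rw [alphaMap_eq]
  exact ofSeq_idx u

lemma degMon_alphaMap (a : ℕ → ℕ) (u : Mon) : degMon (alphaMap a u) = degMon u := by
  rw [alphaMap_eq, degMon_ofSeq]

lemma alphaMap_apply (a : ℕ → ℕ) (u : Mon) (l : ℕ) :
    alphaMap a u l = ((Finset.range (degMon u)).filter fun t => idx u t + a t = l).card := by
  rw [alphaMap_eq, ofSeq_apply]

lemma ext_idx {u v : Mon} (hd : degMon u = degMon v) (h : ∀ t < degMon u, idx u t = idx v t) :
    u = v := by
  rw [← ofSeq_idx u, ← ofSeq_idx v, ← hd, ofSeq, ofSeq]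
  congr 1
  exact Multiset.map_congr rfl fun t ht => h t (Multiset.mem_range.1 ht)

lemma prec_iff {u v : Mon} :
    prec u v ↔ degMon u = degMon v ∧ ∀ t < degMon u, idx u t ≤ idx v t := by
  rw [prec, List.forall₂_iff_get]
  simp only [List.get_eq_getElem, sortedIdx_getElem, length_sortedIdx]
  refine and_congr_right fun h => ?_
  exact ⟨fun H t ht => H t ht (h ▸ ht), fun H t ht _ => H t ht⟩

/-- The product of the `e` smallest variables of `u`. -/
def pre (u : Mon) (e : ℕ) : Mon := ofSeq e (idx u)

lemma degMon_pre (u : Mon) (e : ℕ) : degMon (pre u e) = e := degMon_ofSeq _ _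

lemma idx_pre {u : Mon} {e t : ℕ} (he : e ≤ degMon u) (ht : t < e) :
    idx (pre u e) t = idx u t :=
  idx_ofSeq (fun _ _ h h' => idx_mono u h.le (by omega)) ht

lemma pre_self (u : Mon) : pre u (degMon u) = u := ofSeq_idx u

lemma alphaMap_pre_le (a : ℕ → ℕ) {u : Mon} {e : ℕ} (he : e ≤ degMon u) :
    alphaMap a (pre u e) ≤ alphaMap a u := by
  intro l
  rw [alphaMap_apply, alphaMap_apply, degMon_pre]
  refine Finset.card_le_card fun t ht => ?_
  rw [Finset.mem_filter, Finset.mem_range] at ht ⊢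
  rw [idx_pre he ht.1] at ht
  exact ⟨by omega, ht.2⟩

lemma pre_le {u : Mon} {e : ℕ} (he : e ≤ degMon u) : pre u e ≤ u := by
  simpa only [alphaMap_zero] using alphaMap_pre_le (fun _ => 0) he

/-- If `w` divides `v`, then the initial part of `v` of degree `deg w` is `≼ w`. -/
lemma idx_le_of_le {w v : Mon} (h : w ≤ v) {t : ℕ} (ht : t < degMon w) : idx v t ≤ idx w t := by
  have hsub : (sortedIdx w).Sublist (sortedIdx v) := by
    refine List.sublist_of_subperm_of_pairwise ?_ (pairwise_sortedIdx w) (pairwise_sortedIdx v)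
    rw [← Multiset.coe_le, sortedIdx, sortedIdx, Multiset.sort_eq, Multiset.sort_eq]
    exact Finsupp.toMultiset_strictMono.monotone h
  obtain ⟨f, hf⟩ := List.sublist_iff_exists_fin_orderEmbedding_get_eq.1 hsub
  have hlt : t < (sortedIdx w).length := by rwa [length_sortedIdx]
  -- a strictly increasing map of `Fin` types dominates the identity
  have hge : ∀ n (hn : n < (sortedIdx w).length), n ≤ (f ⟨n, hn⟩ : ℕ) := by
    intro n
    induction n with
    | zero => intro _; exact Nat.zero_le _
    | succ n ih =>
      intro hn
      have h1 := ih (by omega)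
      have h2 : f ⟨n, by omega⟩ < f ⟨n + 1, hn⟩ := f.strictMono (by simp [Fin.lt_def])
      rw [Fin.lt_def] at h2
      omega
  have h3 := hf ⟨t, hlt⟩
  rw [List.get_eq_getElem, List.get_eq_getElem, sortedIdx_getElem, sortedIdx_getElem] at h3
  rw [h3]
  refine idx_mono v (hge t hlt) ?_
  rw [← length_sortedIdx]
  exact (f ⟨t, hlt⟩).2

/-! ### Strongly stable sets of monomials -/

/-- The set of monomials of a strongly stable ideal: closed under multiples and under `≼`. -/
structure StronglyStable (I : Set Mon) : Prop where
  up : ∀ u ∈ I, ∀ v, u ≤ v → v ∈ I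
  prec : ∀ v ∈ I, ∀ u, prec u v → u ∈ I

/-- The minimal monomial generators of a set `I` of monomials closed under multiples. -/
def minGens (I : Set Mon) : Set Mon :=
  {u | u ∈ I ∧ ∀ i ∈ u.support, u - Finsupp.single i 1 ∉ I}

lemma le_sub_single {w u : Mon} (h : w ≤ u) (hne : w ≠ u) :
    ∃ i ∈ u.support, w ≤ u - Finsupp.single i 1 := by
  obtain ⟨i, hi⟩ : ∃ i, w i < u i := by
    by_contra! hc
    exact hne (le_antisymm h hc)
  refine ⟨i, Finsupp.mem_support_iff.2 (by omega), fun x => ?_⟩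
  rw [Finsupp.tsub_apply, Finsupp.single_apply]
  split_ifs with hx
  · subst hx; omega
  · simpa using h x

lemma eq_of_le_of_mem_minGens {I : Set Mon} (hI : ∀ u ∈ I, ∀ v, u ≤ v → v ∈ I) {u w : Mon}
    (hu : u ∈ minGens I) (hw : w ∈ I) (h : w ≤ u) : w = u := by
  by_contra hne
  obtain ⟨i, hi, hle⟩ := le_sub_single h hne
  exact hu.2 i hi (hI w hw _ hle)

/-- Every monomial `v` of a strongly stable ideal has an initial part which is a minimal
generator. This is what makes `α^a` compatible with divisibility of generators, since `α^a` of an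
initial part of `v` divides `α^a(v)`. -/
lemma exists_pre_mem_minGens {I : Set Mon} (hI : StronglyStable I) {v : Mon} (hv : v ∈ I) :
    ∃ e ≤ degMon v, pre v e ∈ minGens I := by
  have hex : ∃ e, e ≤ degMon v ∧ pre v e ∈ I := ⟨degMon v, le_rfl, by rwa [pre_self]⟩
  obtain ⟨he, heI⟩ := Nat.find_spec hex
  set e := Nat.find hex with hedef
  refine ⟨e, he, heI, fun i hi hw => ?_⟩
  set w := pre v e - Finsupp.single i 1 with hwdef
  have hle : Finsupp.single i 1 ≤ pre v e := by
    rw [Finsupp.single_le_iff]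
    exact Nat.one_le_iff_ne_zero.2 (Finsupp.mem_support_iff.1 hi)
  have hdeg : degMon w + 1 = e := by
    have h1 := congrArg degMon (tsub_add_cancel_of_le hle)
    rw [degMon_add, degMon_pre, ← hwdef] at h1
    rw [← h1]
    congr 1
    simp [degMon]
  have hmin : degMon w ≤ degMon v ∧ pre v (degMon w) ∈ I := by
    refine ⟨by omega, hI.prec w hw _ (prec_iff.2 ⟨degMon_pre _ _, fun t ht => ?_⟩)⟩
    rw [degMon_pre] at ht
    rw [idx_pre (by omega) ht]
    exact idx_le_of_le (tsub_le_self.trans (pre_le he)) ht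
  have := Nat.find_min' hex hmin
  omega

/-! ### Linear quotients for `α^a` of a strongly stable ideal -/

/-- The index preceding the `t`-th index of `u`, with value `0` for `t = 0`. -/
def prevIdx (u : Mon) (t : ℕ) : ℕ := if t = 0 then 0 else idx u (t - 1)

/-- The indices of the variables generating the colon ideal of the earlier generators by
`α^a(u)`: the union of the intervals `[i_{t-1} + a_t, i_t + a_t)`, where `i_{-1} = 0`. -/
def colonVars (a : ℕ → ℕ) (u : Mon) : Finset ℕ :=
  (Finset.range (degMon u)).biUnion fun t => Finset.Ico (prevIdx u t + a t) (idx u t + a t)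

lemma card_colonVars {a : ℕ → ℕ} (ha : Monotone a) (u : Mon) :
    (colonVars a u).card = ∑ t ∈ Finset.range (degMon u), (idx u t - prevIdx u t) := by
  rw [colonVars, Finset.card_biUnion]
  · refine Finset.sum_congr rfl fun t _ => ?_
    rw [Nat.card_Ico]; omega
  · have key : ∀ t t', t < t' → t' < degMon u → Disjoint
        (Finset.Ico (prevIdx u t + a t) (idx u t + a t))
        (Finset.Ico (prevIdx u t' + a t') (idx u t' + a t')) := by
      intro t t' htt ht'
      rw [Finset.disjoint_left]
      intro x hx hx'
      rw [Finset.mem_Ico] at hx hx'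
      have h1 : idx u t ≤ prevIdx u t' := by
        rw [prevIdx, if_neg (by omega)]
        exact idx_mono u (by omega) (by omega)
      have h2 := ha htt.le
      omega
    intro t ht t' ht' hne
    rw [Finset.coe_range, Set.mem_Iio] at ht ht'
    rcases lt_or_gt_of_ne hne with h | h
    · exact key t t' h ht'
    · exact (key t' t h ht).symm

/-- The generators are ordered by degree and then by the sum of the indices; this refines `≼`
within each degree. -/
def genKey (u : Mon) : ℕ ×ₗ ℕ :=
  toLex (degMon u, ∑ t ∈ Finset.range (degMon u), idx u t)

lemma genKey_lt_iff {u v : Mon} : genKey u < genKey v ↔ degMon u < degMon v ∨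
    degMon u = degMon v ∧ ∑ t ∈ Finset.range (degMon u), idx u t <
      ∑ t ∈ Finset.range (degMon v), idx v t :=
  Prod.Lex.lt_iff

lemma genKey_le_iff {u v : Mon} : genKey u ≤ genKey v ↔ degMon u < degMon v ∨
    degMon u = degMon v ∧ ∑ t ∈ Finset.range (degMon u), idx u t ≤
      ∑ t ∈ Finset.range (degMon v), idx v t :=
  Prod.Lex.le_iff

/-- For `l` in the interval `[i_{t-1} + a_t, i_t + a_t)`, replacing the `t`-th index of `u` by
`l - a_t` gives a smaller monomial of `I`; an initial part of it is an earlier generator whose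
image divides `x_l · α^a(u)`. -/
lemma exists_gen_of_mem_colonVars {I : Set Mon} (hI : StronglyStable I) (a : ℕ → ℕ) {u : Mon}
    (hu : u ∈ I) {l : ℕ} (hl : l ∈ colonVars a u) {c : Mon} (hc : c l ≠ 0) :
    ∃ v ∈ minGens I, genKey v < genKey u ∧ alphaMap a v ≤ alphaMap a u + c := by
  rw [colonVars, Finset.mem_biUnion] at hl
  obtain ⟨t, ht, hl⟩ := hl
  rw [Finset.mem_range] at ht
  rw [Finset.mem_Ico] at hl
  set f : ℕ → ℕ := Function.update (idx u) t (l - a t) with hfdef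
  have hft : f t = l - a t := Function.update_self _ _ _
  have hfn : ∀ r, r ≠ t → f r = idx u r := fun r hr => Function.update_of_ne hr _ _
  have hfmono : ∀ r r', r < r' → r' < degMon u → f r ≤ f r' := by
    intro r r' hr hr'
    have hm := idx_mono u hr.le hr'
    by_cases h1 : r = t
    · rw [hfn r' (by omega), h1, hft]
      rw [h1] at hm; omega
    · by_cases h2 : r' = t
      · rw [hfn r h1, h2, hft]
        have h3 : idx u r ≤ prevIdx u t := by
          rw [prevIdx, if_neg (by omega)]
          exact idx_mono u (by omega) (by omega)
        omega
      · rwa [hfn r h1, hfn r' h2]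
  have hfle : ∀ r, f r ≤ idx u r := by
    intro r
    by_cases h : r = t
    · rw [h, hft]; omega
    · rw [hfn r h]
  set v := ofSeq (degMon u) f
  have hdv : degMon v = degMon u := degMon_ofSeq _ _
  have hiv : ∀ r < degMon u, idx v r = f r := fun r hr => idx_ofSeq hfmono hr
  have hvI : v ∈ I := by
    refine hI.prec u hu v (prec_iff.2 ⟨hdv, fun r hr => ?_⟩)
    rw [hiv r (by omega)]
    exact hfle r
  have hvu : alphaMap a v ≤ alphaMap a u + c := by
    intro m
    rw [Finsupp.add_apply, alphaMap_apply, alphaMap_apply, hdv]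
    by_cases hm : m = l
    · refine (Finset.card_le_card (t := insert t ((Finset.range (degMon u)).filter
        fun r => idx u r + a r = m)) fun r hr => ?_).trans ((Finset.card_insert_le _ _).trans ?_)
      · rw [Finset.mem_filter, Finset.mem_range] at hr
        rw [Finset.mem_insert, Finset.mem_filter, Finset.mem_range]
        by_cases hrt : r = t
        · exact Or.inl hrt
        · rw [hiv r hr.1, hfn r hrt] at hr
          exact Or.inr hr
      · rw [hm]; omega
    · refine (Finset.card_le_card fun r hr => ?_).trans (Nat.le_add_right _ _)
      rw [Finset.mem_filter, Finset.mem_range] at hr ⊢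
      rw [hiv r hr.1] at hr
      by_cases hrt : r = t
      · rw [hrt, hft] at hr; omega
      · rwa [hfn r hrt] at hr
  obtain ⟨e, he, hgen⟩ := exists_pre_mem_minGens hI hvI
  refine ⟨pre v e, hgen, ?_, (alphaMap_pre_le a he).trans hvu⟩
  rw [genKey_lt_iff, degMon_pre]
  rcases he.eq_or_lt with he | he
  · right
    refine ⟨by omega, ?_⟩
    rw [he, pre_self, hdv]
    refine Finset.sum_lt_sum (fun r hr => ?_) ⟨t, Finset.mem_range.2 ht, ?_⟩
    · rw [hiv r (Finset.mem_range.1 hr)]; exact hfle r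
    · rw [hiv t ht, hft]; omega
  · left; omega

/-- If the image of an earlier generator `v` divides `α^a(u) · c`, take the first position `t` at
which the index of `v` is smaller than that of `u` (there is one by minimality of `u` and the
choice of the order). Then `l = j_t + a_t` lies in the `t`-th interval, and `x_l` occurs in
`α^a(v)` more often than in `α^a(u)`. -/
lemma exists_mem_colonVars {I : Set Mon} (hI : StronglyStable I) {a : ℕ → ℕ} (ha : Monotone a)
    {u v : Mon} (hu : u ∈ minGens I) (hv : v ∈ I) (hne : v ≠ u) (hkey : genKey v ≤ genKey u)
    {c : Mon} (hc : alphaMap a v ≤ alphaMap a u + c) : ∃ l ∈ colonVars a u, c l ≠ 0 := by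
  rw [genKey_le_iff] at hkey
  have hdeg : degMon v ≤ degMon u := by omega
  have hex : ∃ t, t < degMon v ∧ idx v t < idx u t := by
    by_contra! hall
    have hpre : pre u (degMon v) ∈ I := by
      refine hI.prec v hv _ (prec_iff.2 ⟨degMon_pre _ _, fun t ht => ?_⟩)
      rw [degMon_pre] at ht
      rw [idx_pre hdeg ht]
      exact hall t ht
    have h1 := congrArg degMon (eq_of_le_of_mem_minGens hI.up hu hpre (pre_le hdeg))
    rw [degMon_pre] at h1
    have h2 : ∑ t ∈ Finset.range (degMon v), idx v t ≤
        ∑ t ∈ Finset.range (degMon v), idx u t := by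
      rcases hkey with h | h
      · omega
      · rw [← h1] at h; exact h.2
    have h3 : ∀ t ∈ Finset.range (degMon v), idx u t ≤ idx v t :=
      fun t ht => hall t (Finset.mem_range.1 ht)
    have h4 := (Finset.sum_eq_sum_iff_of_le h3).1 (le_antisymm (Finset.sum_le_sum h3) h2)
    exact hne (ext_idx h1 fun t ht => (h4 t (Finset.mem_range.2 ht)).symm)
  obtain ⟨htv, htlt⟩ := Nat.find_spec hex
  set t := Nat.find hex with htdef
  have hmin : ∀ r < t, idx u r ≤ idx v r := by
    intro r hr
    have := Nat.find_min hex hr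
    by_contra h
    exact this ⟨by omega, by omega⟩
  refine ⟨idx v t + a t, ?_, ?_⟩
  · rw [colonVars, Finset.mem_biUnion]
    refine ⟨t, Finset.mem_range.2 (by omega), Finset.mem_Ico.2 ⟨?_, by omega⟩⟩
    refine Nat.add_le_add_right ?_ _
    rw [prevIdx]
    split_ifs with h0
    · exact Nat.zero_le _
    · exact (hmin (t - 1) (by omega)).trans (idx_mono v (by omega) htv)
  · intro hc0
    have h1 := hc (idx v t + a t)
    rw [Finsupp.add_apply, hc0, add_zero, alphaMap_apply, alphaMap_apply] at h1
    refine absurd h1 (not_le.2 (Finset.card_lt_card ?_))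
    rw [Finset.ssubset_iff_of_subset]
    · refine ⟨t, by simp [htv], ?_⟩
      simp only [Finset.mem_filter, not_and]
      intro _ h
      omega
    · intro r hr
      rw [Finset.mem_filter, Finset.mem_range] at hr ⊢
      have hrt : r < t := by
        by_contra hrt
        have h2 := idx_mono u (not_lt.1 hrt) hr.1
        have h3 := ha (not_lt.1 hrt)
        omega
      have h2 := hmin r hrt
      have h3 := idx_mono v hrt.le htv
      have h4 := ha hrt.le
      omega

/-- The images under `α^a` of the minimal generators of a strongly stable ideal have linear
quotients with respect to `genKey`. -/
lemma linQuot_alphaMap {I : Set Mon} (hI : StronglyStable I) {a : ℕ → ℕ} (ha : Monotone a)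
    (s : Finset Mon) (hs : ↑s = minGens I) : LinQuot (alphaMap a) (colonVars a) s := by
  -- prove the claim for all initial segments of the generators
  suffices H : ∀ s : Finset Mon, ↑s ⊆ minGens I →
      (∀ u ∈ s, ∀ v ∈ minGens I, genKey v < genKey u → v ∈ s) →
      LinQuot (alphaMap a) (colonVars a) s by
    refine H s hs.le fun u _ v hv _ => ?_
    rwa [← hs] at hv
  intro s
  induction s using Finset.induction_on_max_value genKey with
  | empty => intro _ _; exact LinQuot.empty
  | insert u s hu hmax ih =>
    intro hsub hinit
    have huG : u ∈ minGens I := hsub (Finset.mem_insert_self u s)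
    refine LinQuot.insert u s hu (ih (fun v hv => hsub (Finset.mem_insert_of_mem hv)) ?_) ?_ ?_
    · intro w hw v hv hlt
      rcases Finset.mem_insert.1 (hinit w (Finset.mem_insert_of_mem hw) v hv hlt) with rfl | h
      · exact absurd (hmax w hw) (not_le.2 hlt)
      · exact h
    · intro v hv
      have := genKey_le_iff.1 (hmax v hv)
      rw [degMon_alphaMap, degMon_alphaMap]
      omega
    · intro c
      constructor
      · rintro ⟨v, hv, hle⟩
        exact exists_mem_colonVars hI ha huG (hsub (Finset.mem_insert_of_mem hv)).1
          (fun h => hu (h ▸ hv)) (hmax v hv) hle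
      · rintro ⟨l, hl, hcl⟩
        obtain ⟨v, hv, hlt, hle⟩ := exists_gen_of_mem_colonVars hI a huG.1 hl hcl
        refine ⟨v, ?_, hle⟩
        rcases Finset.mem_insert.1 (hinit u (Finset.mem_insert_self u s) v hv hlt) with rfl | h
        · exact absurd hlt (lt_irrefl _)
        · exact h

/-! ### Ideals of the polynomial ring -/

section Ideals

variable (K : Type) [Field K]

lemma memMon_span_iff (G : Set Mon) (u : Mon) :
    memMon K (Ideal.span ((fun u => mono K u) '' G)) u ↔ ∃ g ∈ G, g ≤ u := by
  rw [memMon]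
  refine MvPolynomial.mem_ideal_span_monomial_image.trans ?_
  rw [mono, MvPolynomial.support_monomial, if_neg one_ne_zero]
  simp

lemma memMon_monSpan (G : Finset Mon) (u : Mon) : memMon K (monSpan K G) u ↔ memGen G u :=
  memMon_span_iff K _ u

lemma stronglyStable_memMon {I : Ideal (MvPolynomial ℕ K)} (hI : IsFGStronglyStable K I) :
    StronglyStable {u | memMon K I u} := by
  refine ⟨fun u hu v huv => ?_, fun v hv u huv => hI.2 u v hv huv⟩
  obtain ⟨w, rfl⟩ := exists_add_of_le huv
  have : mono K (u + w) = mono K w * mono K u := by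
    rw [mono, mono, mono, MvPolynomial.monomial_mul, one_mul, add_comm]
  change mono K (u + w) ∈ I
  rw [this]
  exact I.mul_mem_left _ hu

lemma GSet_finite {I : Ideal (MvPolynomial ℕ K)} (hI : IsFGStronglyStable K I) :
    (GSet K I).Finite := by
  have hup := (stronglyStable_memMon K hI).up
  obtain ⟨⟨G, rfl⟩, _⟩ := hI
  refine G.finite_toSet.subset fun u hu => ?_
  obtain ⟨g, hg, hle⟩ := (memMon_monSpan K G u).1 hu.1
  have hgI : memMon K (monSpan K G) g := (memMon_monSpan K G g).2 ⟨g, hg, le_rfl⟩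
  exact eq_of_le_of_mem_minGens hup hu hgI hle ▸ hg

lemma betti_monSpan {G : Finset Mon} {σ : Mon → Mon} {A : Mon → Finset ℕ} {s : Finset Mon}
    (hs : LinQuot σ A s) (hG : ∀ x, memGen G x ↔ memGen (s.image σ) x) (i j : ℕ) :
    betti K (monSpan K G) i j =
      ∑ u ∈ s, if degMon (σ u) + i = j then (A u).card.choose i else 0 := by
  have hex : ∃ G' : Finset Mon, monSpan K G = monSpan K G' := ⟨G, rfl⟩
  rw [betti, dif_pos hex]
  refine bettiGens_linQuot K hs (fun x => ?_) i j
  rw [← memMon_monSpan K, ← hex.choose_spec, memMon_monSpan, hG]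

lemma sigmaIdeal_eq (σ : Mon → Mon) {I : Ideal (MvPolynomial ℕ K)} {s : Finset Mon}
    (hs : ↑s = GSet K I) : sigmaIdeal K σ I = monSpan K (s.image σ) := by
  rw [sigmaIdeal, monSpan, ← hs, Finset.coe_image, Set.image_image]

/-- The Eliahou–Kervaire type formula for `α^a(I)`; its right-hand side does not involve `a`. -/
lemma betti_sigmaIdeal {I : Ideal (MvPolynomial ℕ K)} (hI : IsFGStronglyStable K I)
    {a : ℕ → ℕ} (ha : Monotone a) {s : Finset Mon} (hs : ↑s = GSet K I) (i j : ℕ) :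
    betti K (sigmaIdeal K (alphaMap a) I) i j = ∑ u ∈ s, if degMon u + i = j then
      (∑ t ∈ Finset.range (degMon u), (idx u t - prevIdx u t)).choose i else 0 := by
  rw [sigmaIdeal_eq K _ hs, betti_monSpan K
    (linQuot_alphaMap (stronglyStable_memMon K hI) ha s hs) (fun _ => Iff.rfl)]
  simp only [degMon_alphaMap, card_colonVars ha]

/-- A strongly stable ideal is the image of itself under `α^0`. -/
lemma sigmaIdeal_zero {I : Ideal (MvPolynomial ℕ K)} (hI : IsFGStronglyStable K I) :
    sigmaIdeal K (alphaMap fun _ => 0) I = I := by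
  have hst := stronglyStable_memMon K hI
  simp only [sigmaIdeal, alphaMap_zero]
  refine le_antisymm (Ideal.span_le.2 ?_) ?_
  · rintro _ ⟨u, hu, rfl⟩
    exact hu.1
  · obtain ⟨G, hG⟩ := hI.1
    conv_lhs => rw [hG]
    refine Ideal.span_le.2 ?_
    rintro _ ⟨v, hv, rfl⟩
    have hvI : memMon K I v := by
      rw [hG, memMon_monSpan]; exact ⟨v, hv, le_rfl⟩
    obtain ⟨e, he, hgen⟩ := exists_pre_mem_minGens hst hvI
    exact (memMon_span_iff K _ v).2 ⟨_, hgen, pre_le he⟩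

end Ideals

end

/-- **Proposition (Murai, Prop. 1.9).** For a nondecreasing sequence
`a = (0, a₁, a₂, …)` of integers, the map `α^a : M_[∞] → M_[∞]` is a stable
operator. -/
theorem alphaMap_isStableOperator (K : Type) [Field K] [Infinite K]
    (a : ℕ → ℕ) (ha0 : a 0 = 0) (ha : Monotone a) :
    IsStableOperator K (alphaMap a) := by
  refine ⟨fun I hI i j => ?_, fun J I hJ hI hJI => ?_⟩
  · have hs := (GSet_finite K hI).coe_toFinset
    have h0 := betti_sigmaIdeal K hI (monotone_const (c := 0)) hs i j
    rw [sigmaIdeal_zero K hI] at h0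
    rw [h0, betti_sigmaIdeal K hI ha hs]
  · refine Ideal.span_le.2 ?_
    rintro _ ⟨u, hu, rfl⟩
    obtain ⟨e, he, hgen⟩ := exists_pre_mem_minGens (stronglyStable_memMon K hI) (hJI hu.1)
    have h := (memMon_span_iff K (alphaMap a '' GSet K I) (alphaMap a u)).2
      ⟨alphaMap a (pre u e), ⟨_, hgen, rfl⟩, alphaMap_pre_le a he⟩
    rw [Set.image_image] at h
    exact h

end SqueezedSpheres
end
end

section
/- Let a = (0, a_1, a_2, …) be a nondecreasing infinite sequence of integers and let I ⊂ S_[∞] be a finitely generated strongly stable ideal. If the monomial u belongs to I, then α^a(u) belongs to the ideal α^a(I) generated by {α^a(w) : w ∈ G(I)}. -/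
/-!
Write `u = x_{i₁}⋯x_{i_d}` with `i₁ ≤ ⋯ ≤ i_d`, and let `w = x_{i₁}⋯x_{i_k}` be the shortest
prefix of `u` that lies in `I`. Then `w` is a minimal generator: if `w / x_{i_j}` were in `I` for
some `j`, then so would be `w / x_{i_k} ≼ w / x_{i_j}` by strong stability
(`forall₂_dropLast_erase`), and this is a shorter prefix of `u`. Since `w` is a prefix of `u`, the
shifts applied by `α^a` to the common variables agree, so `α^a(w)` divides `α^a(u)`.
-/

open scoped Classical
noncomputable section
namespace SqueezedSpheres

/-! ### Shortest prefixes in a strongly stable ideal -/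

/-- The monomial `∏_{i ∈ l} x_i` of a list of indices. -/
def ofIdx (l : List ℕ) : Mon := Multiset.toFinsupp (l : Multiset ℕ)

lemma ofIdx_sortedIdx (u : Mon) : ofIdx (sortedIdx u) = u := by
  simp [ofIdx, sortedIdx]

lemma sortedIdx_ofIdx {l : List ℕ} (h : l.Pairwise (· ≤ ·)) : sortedIdx (ofIdx l) = l := by
  unfold sortedIdx ofIdx
  rw [Multiset.toFinsupp_toMultiset]
  refine List.Perm.eq_of_pairwise' (Multiset.pairwise_sort _ _) h ?_
  exact Multiset.coe_eq_coe.mp (Multiset.sort_eq _ _)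

lemma ofIdx_erase (l : List ℕ) (i : ℕ) :
    ofIdx l - Finsupp.single i 1 = ofIdx (l.erase i) := by
  ext j
  simp only [ofIdx, Finsupp.coe_tsub, Pi.sub_apply, Multiset.toFinsupp_apply,
    Multiset.coe_count, List.count_erase, Finsupp.single_apply, beq_iff_eq]

/-- Removing the largest index from a weakly increasing list gives a list that is termwise at
most the one obtained by removing any other index. -/
lemma forall₂_dropLast_erase {l : List ℕ} (h : l.Pairwise (· ≤ ·)) {i : ℕ} (hi : i ∈ l) :
    List.Forall₂ (· ≤ ·) l.dropLast (l.erase i) := by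
  induction l with
  | nil => simp at hi
  | cons b t ih =>
    rw [List.pairwise_cons] at h
    by_cases hb : b = i
    · subst hb
      rw [List.erase_cons_head]
      clear ih hi
      induction t generalizing b with
      | nil => simp
      | cons c s ih =>
        rw [List.dropLast_cons_cons]
        exact .cons (h.1 c (by simp)) (ih c (List.pairwise_cons.mp h.2))
    · have hit : i ∈ t := by
        rcases List.mem_cons.mp hi with rfl | h'
        · exact absurd rfl hb
        · exact h'
      rw [List.erase_cons_tail (by simpa using hb),
        List.dropLast_cons_of_ne_nil (List.ne_nil_of_mem hit)]
      exact .cons le_rfl (ih h.2 hit)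

/-- `α^a` sends a prefix of `x_{i₁}⋯x_{i_d}` to a divisor of the image. -/
lemma alphaMap_ofIdx_take_le (a : ℕ → ℕ) (u : Mon) (n : ℕ)
    (h : (sortedIdx u).Pairwise (· ≤ ·)) :
    alphaMap a (ofIdx ((sortedIdx u).take n)) ≤ alphaMap a u := by
  unfold alphaMap
  rw [sortedIdx_ofIdx (h.sublist (List.take_sublist _ _))]
  conv_rhs => rw [← List.take_append_drop n (sortedIdx u), List.mapIdx_append, ← Multiset.coe_add,
    map_add]
  exact le_self_add

lemma memMon_of_le (K : Type) [Field K] {I : Ideal (MvPolynomial ℕ K)} {u v : Mon}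
    (h : u ≤ v) (hu : memMon K I u) : memMon K I v := by
  unfold memMon mono at *
  have : (MvPolynomial.monomial v (1 : K)) =
      MvPolynomial.monomial (v - u) 1 * MvPolynomial.monomial u 1 := by
    rw [MvPolynomial.monomial_mul, tsub_add_cancel_of_le h, one_mul]
  rw [this]
  exact I.mul_mem_left _ hu

/-- **Lemma (Murai, Lemma 1.7).** Let `a = (0, a₁, a₂, …)` be a nondecreasing
sequence of integers and `I ⊂ S_[∞]` a finitely generated strongly stable
ideal. If the monomial `u` belongs to `I`, then `α^a(u)` belongs to the ideal
`α^a(I)` generated by `{α^a(w) : w ∈ G(I)}`. -/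
theorem alphaMap_mem_sigmaIdeal (K : Type) [Field K] [Infinite K]
    (a : ℕ → ℕ) (ha0 : a 0 = 0) (ha : Monotone a)
    (I : Ideal (MvPolynomial ℕ K)) (hI : IsFGStronglyStable K I)
    (u : Mon) (hu : memMon K I u) :
    memMon K (sigmaIdeal K (alphaMap a) I) (alphaMap a u) := by
  have hs : (sortedIdx u).Pairwise (· ≤ ·) := Multiset.pairwise_sort _ _
  have hex : ∃ n, memMon K I (ofIdx ((sortedIdx u).take n)) :=
    ⟨(sortedIdx u).length, by rwa [List.take_length, ofIdx_sortedIdx]⟩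
  obtain ⟨n, hn, hmin⟩ : ∃ n, memMon K I (ofIdx ((sortedIdx u).take n)) ∧
      ∀ m < n, ¬ memMon K I (ofIdx ((sortedIdx u).take m)) :=
    ⟨Nat.find hex, Nat.find_spec hex, fun m hm => Nat.find_min hex hm⟩
  refine memMon_of_le K (alphaMap_ofIdx_take_le a u n hs)
    (Ideal.subset_span ⟨_, ⟨hn, fun i hi hmem => ?_⟩, rfl⟩)
  have hs' : ((sortedIdx u).take n).Pairwise (· ≤ ·) := hs.sublist (List.take_sublist _ _)
  have hi' : i ∈ (sortedIdx u).take n := by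
    simpa [ofIdx, Multiset.toFinsupp_support] using hi
  rw [ofIdx_erase] at hmem
  have hdrop : memMon K I (ofIdx ((sortedIdx u).take n).dropLast) := by
    refine hI.2 _ _ hmem ?_
    unfold prec
    rw [sortedIdx_ofIdx (hs'.sublist (List.dropLast_sublist _)),
      sortedIdx_ofIdx (hs'.sublist List.erase_sublist)]
    exact forall₂_dropLast_erase hs' hi'
  have hpos := List.length_pos_of_mem hi'
  have hlen := List.length_take_le n (sortedIdx u)
  rw [List.dropLast_eq_take, List.take_take] at hdrop
  exact hmin _ (by omega) hdrop

end SqueezedSpheres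
end
end
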